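/- Let d ≥ 3. Let N ≥ 1 and let D ⊆ Z^d satisfy Q_{4N} ⊆ D. Let 8 ≤ m ≤ N/2 and n ≤ N. Suppose 𝒦 is an arbitrary nonempty subset of Q_n and x₀ ∈ 𝒦 ∩ H_n, and let z₀ = x₀ + m e₁. Then there exists a constant c = c(d) > 0 such that P^{z₀}( T_{Q(x₀,m/2)} > τ_D | T_𝒦 > τ_D ) ≥ c. -/

import Mathlib

open MeasureTheory
open scoped ENNReal Classical

namespace USFPaper

/-- Vertices of the nearest-neighbour integer lattice `ℤ^d`. -/
abbrev V (d : ℕ) := Fin d → ℤ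

variable {d : ℕ}

/-- Nearest-neighbour adjacency in `ℤ^d`. -/
def adj (x y : V d) : Prop := (∑ i, |x i - y i|) = 1

/-- The cube `Q(x,r) = { y : ‖x - y‖_∞ ≤ r }`. -/
def cube (x : V d) (r : ℕ) : Set (V d) := { y | ∀ i, |y i - x i| ≤ (r : ℤ) }

/-- Inner boundary `∂ᵢA` of a set `A`. -/
def innerBdry (A : Set (V d)) : Set (V d) := { x | x ∈ A ∧ ∃ y, adj x y ∧ y ∉ A }

/-- Euclidean distance on `ℤ^d`. -/
noncomputable def eudist (x y : V d) : ℝ := Real.sqrt (∑ i, ((x i : ℝ) - (y i : ℝ)) ^ 2)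

/-- The `k`-th coordinate unit vector. -/
def unitVec (k : ℕ) : V d := fun i => if (i : ℕ) = k then 1 else 0

/-- `μ` is the law of simple random walk on `ℤ^d` started at `x`, as a probability
measure on path space: every nearest-neighbour cylinder of length `n` starting at `x`
has probability `(2d)⁻ⁿ`. -/
def IsSRWLaw (μ : Measure (ℕ → V d)) (x : V d) : Prop :=
  IsProbabilityMeasure μ ∧
  ∀ (n : ℕ) (γ : ℕ → V d), γ 0 = x → (∀ i < n, adj (γ i) (γ (i + 1))) →
    μ { ω | ∀ i ≤ n, ω i = γ i } = (2 * (d : ℝ≥0∞))⁻¹ ^ n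

/-- First exit time `τ_A` from `A`, valued in `ℕ∞` (`⊤` if the path never leaves `A`). -/
noncomputable def exitTimeE (A : Set (V d)) (ω : ℕ → V d) : ENat :=
  if h : ∃ j, ω j ∉ A then (Nat.find h : ENat) else ⊤

/-- First hitting time `T_A` of `A`, valued in `ℕ∞`. -/
noncomputable def hitTimeE (A : Set (V d)) (ω : ℕ → V d) : ENat :=
  if h : ∃ j, ω j ∈ A then (Nat.find h : ENat) else ⊤

/-- First positive hitting time `T⁺_A` of `A`, valued in `ℕ∞`. -/
noncomputable def hitTimePosE (A : Set (V d)) (ω : ℕ → V d) : ENat :=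
  if h : ∃ j, 1 ≤ j ∧ ω j ∈ A then (Nat.find h : ENat) else ⊤

/-- First exit time from `A` as a natural number (junk value `0` if the path never exits). -/
noncomputable def exitTime (A : Set (V d)) (ω : ℕ → V d) : ℕ := (exitTimeE A ω).toNat

/-- Index of the first hit of `A` (junk value `0` if `A` is never hit). -/
noncomputable def hitIdx (A : Set (V d)) (γ : ℕ → V d) : ℕ := (hitTimeE A γ).toNat

/-- First index `≥ t` at which the path lies in `A` (junk value `t`). -/
noncomputable def hitIdxFrom (A : Set (V d)) (t : ℕ) (γ : ℕ → V d) : ℕ :=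
  if h : ∃ j, t ≤ j ∧ γ j ∈ A then Nat.find h else t

/-- The path frozen at its first exit from `D`. -/
noncomputable def stopAt (D : Set (V d)) (ω : ℕ → V d) : ℕ → V d :=
  fun j => if (j : ENat) ≤ exitTimeE D ω then ω j else ω (exitTime D ω)

/-- Time of the last visit of the path to the point `ω t`, at or after time `t`
(junk value if there are infinitely many such visits). -/
noncomputable def lastVisit (ω : ℕ → V d) (t : ℕ) : ℕ := sSup { j | t ≤ j ∧ ω j = ω t }

/-- The times of the chronological loop erasure (last-exit decomposition). -/
noncomputable def leTime (ω : ℕ → V d) : ℕ → ℕ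
  | 0 => lastVisit ω 0
  | k + 1 => lastVisit ω (leTime ω k + 1)

/-- Chronological loop erasure of an (infinite, transient) path. -/
noncomputable def infLoopErase (ω : ℕ → V d) : ℕ → V d := fun k => ω (leTime ω k)

/-- The loop erasure `L` of the walk stopped at its first exit from `D`. -/
noncomputable def lerw (D : Set (V d)) (ω : ℕ → V d) : ℕ → V d := infLoopErase (stopAt D ω)

/-- The event `T_A > τ_D`: the walk does not visit `A` at any time up to (and
including) its first exit from `D`; if it never exits `D`, it never visits `A`. -/
def avoidBeforeExit (D A : Set (V d)) (ω : ℕ → V d) : Prop :=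
  ∀ j : ℕ, (j : ENat) ≤ exitTimeE D ω → ω j ∉ A

/-- The event `T⁺_A > τ_D` (visits of `A` at positive times only). -/
def avoidBeforeExitPos (D A : Set (V d)) (ω : ℕ → V d) : Prop :=
  ∀ j : ℕ, 1 ≤ j → (j : ENat) ≤ exitTimeE D ω → ω j ∉ A

/-- The right-hand face (in the first coordinate direction) of the cube `Q(x₀,m)`. -/
def rightFace (x₀ : V d) (m : ℕ) : Set (V d) :=
  { y | y ∈ cube x₀ m ∧ ∀ i : Fin d, (i : ℕ) = 0 → y i = x₀ i + (m : ℤ) }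


/-- unit vector -/
def ev (i : Fin d) : V d := Pi.single i 1

/-- neighbour average -/
noncomputable def av (f : V d → ℝ) (x : V d) : ℝ :=
  (∑ i, (f (x + ev i) + f (x - ev i))) / (2 * d)

lemma av_mono {f g : V d → ℝ} {x : V d}
    (h : ∀ i, f (x + ev i) ≤ g (x + ev i)) (h' : ∀ i, f (x - ev i) ≤ g (x - ev i)) :
    av f x ≤ av g x := by
  unfold av
  gcongr with i
  · exact h i
  · exact h' i

lemma av_const (hd : 0 < d) (c : ℝ) (x : V d) : av (fun _ => c) x = c := by
  unfold av
  have : (d : ℝ) ≠ 0 := by positivity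
  simp
  field_simp
  ring

lemma av_sub (f g : V d → ℝ) (x : V d) : av (fun y => f y - g y) x = av f x - av g x := by
  unfold av
  rw [← sub_div, ← Finset.sum_sub_distrib]
  congr 1
  apply Finset.sum_congr rfl
  intros
  ring

lemma av_add (f g : V d → ℝ) (x : V d) : av (fun y => f y + g y) x = av f x + av g x := by
  unfold av
  rw [← add_div, ← Finset.sum_add_distrib]
  congr 1
  apply Finset.sum_congr rfl
  intros
  ring

lemma av_smul (c : ℝ) (f : V d → ℝ) (x : V d) : av (fun y => c * f y) x = c * av f x := by
  unfold av
  rw [← mul_div_assoc, Finset.mul_sum]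
  congr 1
  apply Finset.sum_congr rfl
  intros
  ring

lemma av_shift (f : V d → ℝ) (a x : V d) : av (fun y => f (y - a)) x = av f (x - a) := by
  unfold av
  congr 1
  apply Finset.sum_congr rfl
  intro i _
  have h1 : x + ev i - a = x - a + ev i := by abel
  have h2 : x - ev i - a = x - a - ev i := by abel
  simp only [h1, h2]

/-- one-step Harnack -/
lemma av_ge_add (hd : 0 < d) {f : V d → ℝ} {x : V d} 
    (h : ∀ i, 0 ≤ f (x + ev i)) (h' : ∀ i, 0 ≤ f (x - ev i)) (i : Fin d) :
    f (x + ev i) ≤ 2 * d * av f x ∧ f (x - ev i) ≤ 2 * d * av f x := by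
  have hd' : (0:ℝ) < d := by positivity
  have e : 2 * d * av f x = ∑ i, (f (x + ev i) + f (x - ev i)) := by
    unfold av; field_simp
  rw [e]
  have := Finset.single_le_sum (f := fun i => f (x + ev i) + f (x - ev i))
    (fun i _ => add_nonneg (h i) (h' i)) (Finset.mem_univ i)
  beta_reduce at this
  constructor <;> linarith [h i, h' i]

/-- maximum principle -/
lemma maxp (hd : 0 < d) (U : Set (V d)) (hU : U.Finite) (w : V d → ℝ)
    (hw : ∀ x ∈ U, w x ≤ av w x)
    (hb : ∀ x ∈ U, ∀ i, (x + ev i ∉ U → w (x + ev i) ≤ 0) ∧ (x - ev i ∉ U → w (x - ev i) ≤ 0)) :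
    ∀ x ∈ U, w x ≤ 0 := by
  by_contra! hcon
  obtain ⟨x1, hx1, hpos⟩ := hcon
  obtain ⟨x2, hx2, hmax⟩ := hU.exists_maximalFor w U ⟨x1, hx1⟩
  have hmax' : ∀ y ∈ U, w y ≤ w x2 := by
    intro y hy
    rcases le_total (w y) (w x2) with h | h
    · exact h
    · exact hmax hy h
  have hM : 0 < w x2 := lt_of_lt_of_le hpos (hmax' _ hx1)
  let i0 : Fin d := ⟨0, hd⟩
  obtain ⟨x, hx, hmx⟩ := (hU.subset (Set.sep_subset U (fun y => w y = w x2))).exists_maximalFor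
    (fun y => y i0) _ ⟨x2, hx2, rfl⟩
  obtain ⟨hxU, hxw⟩ := hx
  have b1 : ∀ i, w (x + ev i) ≤ w x2 := by
    intro i
    by_cases h : x + ev i ∈ U
    · exact hmax' _ h
    · exact ((hb x hxU i).1 h).trans hM.le
  have b2 : ∀ i, w (x - ev i) ≤ w x2 := by
    intro i
    by_cases h : x - ev i ∈ U
    · exact hmax' _ h
    · exact ((hb x hxU i).2 h).trans hM.le
  have h1 := (av_ge_add hd (f := fun y => w x2 - w y) (x := x) (fun i => by linarith [b1 i])
    (fun i => by linarith [b2 i]) i0).1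
  rw [av_sub, av_const hd] at h1
  have h2 := hw x hxU
  rw [hxw] at h2
  have hd' : (0:ℝ) < d := by positivity
  have h3 : w x2 ≤ w (x + ev i0) := by nlinarith
  have h4 : x + ev i0 ∈ U := by
    by_contra h
    linarith [(hb x hxU i0).1 h]
  have h5 := hmx (j := x + ev i0) ⟨h4, le_antisymm (b1 i0) h3⟩ (by simp [ev])
  simp [ev] at h5

lemma cube_finite (x : V d) (r : ℕ) : (cube x r).Finite := by
  have : cube x r = Set.Icc (fun i => x i - r) (fun i => x i + r) := by
    ext y
    simp only [cube, Set.mem_ofPred_eq, Set.mem_Icc, Pi.le_def, abs_le]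
    constructor
    · intro h; exact ⟨fun i => by linarith [(h i).1], fun i => by linarith [(h i).2]⟩
    · intro h i; exact ⟨by linarith [h.1 i], by linarith [h.2 i]⟩
  rw [this]
  exact Set.finite_Icc _ _

/-- avoidance probability up to time t -/
noncomputable def ap (W A : Set (V d)) : ℕ → V d → ℝ
  | 0, z => if z ∈ A then 0 else 1
  | t + 1, z => if z ∈ A then 0 else if z ∈ W then av (ap W A t) z else 1

lemma ap_nonneg (W A : Set (V d)) (t : ℕ) : ∀ z, 0 ≤ ap W A t z := by
  induction t with
  | zero => intro z; unfold ap; split_ifs <;> norm_num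
  | succ t ih =>
    intro z
    unfold ap
    split_ifs
    · exact le_rfl
    · unfold av
      exact div_nonneg (Finset.sum_nonneg fun i _ => add_nonneg (ih _) (ih _)) (by positivity)
    · norm_num

lemma ap_le_one (hd : 0 < d) (W A : Set (V d)) (t : ℕ) : ∀ z, ap W A t z ≤ 1 := by
  induction t with
  | zero => intro z; unfold ap; split_ifs <;> norm_num
  | succ t ih =>
    intro z
    unfold ap
    split_ifs
    · norm_num
    · rw [← av_const hd 1 z]
      exact av_mono (fun i => ih _) (fun i => ih _)
    · norm_num

lemma ap_anti (hd : 0 < d) (W A : Set (V d)) (t : ℕ) : ∀ z, ap W A (t+1) z ≤ ap W A t z := by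
  induction t with
  | zero =>
    intro z
    have := ap_le_one hd W A (0+1) z
    by_cases h : z ∈ A
    · simp [ap, h]
    · rw [show ap W A 0 z = 1 by simp [ap, h]]; exact this
  | succ t ih =>
    intro z
    rw [ap, ap]
    split_ifs
    · exact le_rfl
    · exact av_mono (fun i => ih _) (fun i => ih _)
    · norm_num

lemma ap_mem (W A : Set (V d)) (t : ℕ) (z) (h : z ∈ A) : ap W A t z = 0 := by
  cases t <;> simp [ap, h]

/-- limiting avoidance probability -/
noncomputable def al (W A : Set (V d)) (z : V d) : ℝ := ⨅ t, ap W A t z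

lemma al_tendsto (hd : 0 < d) (W A : Set (V d)) (z : V d) :
    Filter.Tendsto (fun t => ap W A t z) Filter.atTop (nhds (al W A z)) := 
  tendsto_atTop_ciInf (antitone_nat_of_succ_le fun t => ap_anti hd W A t z)
    ⟨0, by rintro _ ⟨t, rfl⟩; exact ap_nonneg W A t z⟩

lemma al_le_ap (W A : Set (V d)) (t : ℕ) (z : V d) : al W A z ≤ ap W A t z :=
  ciInf_le ⟨0, by rintro _ ⟨t, rfl⟩; exact ap_nonneg W A t z⟩ t

lemma le_al {W A : Set (V d)} {z : V d} {c : ℝ} (h : ∀ t, c ≤ ap W A t z) : c ≤ al W A z :=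
  le_ciInf h

lemma al_nonneg (W A : Set (V d)) (z : V d) : 0 ≤ al W A z := le_al fun t => ap_nonneg W A t z

lemma al_le_one (hd : 0 < d) (W A : Set (V d)) (z : V d) : al W A z ≤ 1 :=
  (al_le_ap W A 0 z).trans (ap_le_one hd W A 0 z)

lemma al_mem (W A : Set (V d)) (z) (h : z ∈ A) : al W A z = 0 :=
  le_antisymm ((al_le_ap W A 0 z).trans (ap_mem W A 0 z h).le) (al_nonneg _ _ _)

lemma al_harm (hd : 0 < d) (W A : Set (V d)) (z) (h : z ∉ A) (hW : z ∈ W) :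
    al W A z = av (al W A) z := by
  have h1 := (al_tendsto hd W A z).comp (Filter.tendsto_add_atTop_nat 1)
  have h2 : Filter.Tendsto (fun t => av (ap W A t) z) Filter.atTop (nhds (av (al W A) z)) := by
    unfold av
    apply Filter.Tendsto.div_const
    apply tendsto_finsetSum
    intro i _
    exact (al_tendsto hd W A _).add (al_tendsto hd W A _)
  refine tendsto_nhds_unique h1 (h2.congr ?_)
  intro t
  simp [ap, h, hW]

lemma al_subharm (hd : 0 < d) (A : Set (V d)) (z) : 
    al Set.univ A z ≤ av (al Set.univ A) z := by
  by_cases h : z ∈ A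
  · rw [al_mem _ _ _ h]
    unfold av
    exact div_nonneg (Finset.sum_nonneg fun i _ => add_nonneg (al_nonneg _ _ _) (al_nonneg _ _ _))
      (by positivity)
  · exact (al_harm hd _ _ _ h (Set.mem_univ _)).le

/-- lower comparison for the avoidance probability -/
lemma lower_al (A : Set (V d)) (v : V d → ℝ) (h1 : ∀ x, v x ≤ 1)
    (h0 : ∀ x ∈ A, v x ≤ 0) (hs : ∀ x ∉ A, v x ≤ av v x) (z : V d) : v z ≤ al Set.univ A z := by
  apply le_al
  intro t
  induction t generalizing z with
  | zero => 
    unfold ap; split_ifs with h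
    · exact h0 _ h
    · exact h1 _
  | succ t ih =>
    by_cases h : z ∈ A
    · rw [ap_mem _ _ _ _ h]; exact h0 _ h
    · simp only [ap, h, if_false, Set.mem_univ, if_true]
      exact (hs _ h).trans (av_mono (fun i => ih _) (fun i => ih _))

/-- reflection in first coordinate -/
def refl0 (i0 : Fin d) (c : ℤ) (x : V d) : V d := Function.update x i0 (2 * c - x i0)

lemma ap_refl (K : Set (V d)) (i0 : Fin d) (n c : ℤ) (hnc : n ≤ c) (hK : ∀ x ∈ K, x i0 ≤ n)
    (t : ℕ) : ∀ x : V d, x i0 ≤ c → ap Set.univ K t x ≤ ap Set.univ K t (refl0 i0 c x) := by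
  have key : ∀ x : V d, x i0 ≤ c → x ∉ K → refl0 i0 c x ∉ K := by
    intro x hx hxK h
    have h1 := hK _ h
    simp [refl0] at h1
    have h2 : x i0 = 2 * c - x i0 := by omega
    apply hxK
    have : refl0 i0 c x = x := by
      unfold refl0; rw [← h2]; simp
    rwa [this] at h
  induction t with
  | zero =>
    intro x hx
    by_cases h : x ∈ K
    · rw [ap_mem _ _ _ _ h]; exact ap_nonneg _ _ _ _
    · simp [ap, h, key x hx h]
  | succ t ih =>
    intro x hx
    by_cases h : x ∈ K
    · rw [ap_mem _ _ _ _ h]; exact ap_nonneg _ _ _ _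
    rcases hx.eq_or_lt with hc | hc
    · have : refl0 i0 c x = x := by
        unfold refl0; rw [← hc, two_mul, add_sub_cancel_right]; simp
      rw [this]
    simp only [ap, h, key x hx h, if_false, Set.mem_univ, if_true]
    unfold av
    gcongr ?_ / _
    apply Finset.sum_le_sum
    intro i _
    have e1 : (x + ev i) i0 ≤ c := by
      simp only [ev, Pi.add_apply, Pi.single_apply]; split_ifs <;> omega
    have e2 : (x - ev i) i0 ≤ c := by
      simp only [ev, Pi.sub_apply, Pi.single_apply]; split_ifs <;> omega
    have a1 := ih _ e1
    have a2 := ih _ e2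
    by_cases hi : i = i0
    · subst hi
      have r1 : refl0 i c (x + ev i) = refl0 i c x - ev i := by
        ext j
        by_cases hj : j = i
        · subst hj; simp [refl0, ev]; ring
        · simp [refl0, ev, hj]
      have r2 : refl0 i c (x - ev i) = refl0 i c x + ev i := by
        ext j
        by_cases hj : j = i
        · subst hj; simp [refl0, ev]; ring
        · simp [refl0, ev, hj]
      rw [r1] at a1; rw [r2] at a2
      linarith
    · have r1 : refl0 i0 c (x + ev i) = refl0 i0 c x + ev i := by
        ext j
        by_cases hj : j = i0
        · subst hj; simp [refl0, ev, Pi.single_apply, Ne.symm hi]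
        · simp [refl0, ev, hj]
      have r2 : refl0 i0 c (x - ev i) = refl0 i0 c x - ev i := by
        ext j
        by_cases hj : j = i0
        · subst hj; simp [refl0, ev, Pi.single_apply, Ne.symm hi]
        · simp [refl0, ev, hj]
      rw [r1] at a1; rw [r2] at a2
      linarith

lemma al_refl (K : Set (V d)) (hd : 0 < d) (i0 : Fin d) (n c : ℤ) (hnc : n ≤ c) (hK : ∀ x ∈ K, x i0 ≤ n)
    (x : V d) (hx : x i0 ≤ c) : al Set.univ K x ≤ al Set.univ K (refl0 i0 c x) :=
  le_al fun t => (al_le_ap _ _ t _).trans (ap_refl K i0 n c hnc hK t x hx)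

/-- path predicate: avoid A up to exit from W, up to time t -/
def good (W A : Set (V d)) : ℕ → (ℕ → V d) → Prop
  | 0, ω => ω 0 ∉ A
  | t + 1, ω => ω 0 ∉ A ∧ (ω 0 ∈ W → good W A t (fun j => ω (j + 1)))

lemma meas_coord (j : ℕ) (A : Set (V d)) : MeasurableSet {ω : ℕ → V d | ω j ∈ A} :=
  (measurable_pi_apply j) ((Set.to_countable A).measurableSet)

lemma meas_good (W A : Set (V d)) (t : ℕ) : MeasurableSet {ω : ℕ → V d | good W A t ω} := by
  induction t with
  | zero => exact (meas_coord 0 A).compl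
  | succ t ih =>
    have h1 : Measurable (fun (ω : ℕ → V d) (j : ℕ) => ω (j + 1)) :=
      measurable_pi_lambda _ fun j => measurable_pi_apply (j + 1)
    have : {ω : ℕ → V d | good W A (t+1) ω} = {ω | ω 0 ∈ A}ᶜ ∩ ({ω | ω 0 ∈ W}ᶜ ∪ 
      (fun (ω : ℕ → V d) (j : ℕ) => ω (j + 1)) ⁻¹' {ω | good W A t ω}) := by
      ext ω
      simp [good, imp_iff_not_or]
    rw [this]
    exact (meas_coord 0 A).compl.inter ((meas_coord 0 W).compl.union (h1 ih))

/-- the 2d neighbours -/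
def nb (y : V d) (p : Fin d × Bool) : V d := if p.2 then y + ev p.1 else y - ev p.1

lemma nb_adj (y : V d) (p : Fin d × Bool) : adj y (nb y p) := by
  unfold adj nb
  have : ∀ i, |y i - (if p.2 then y + ev p.1 else y - ev p.1) i| = if p.1 = i then 1 else 0 := by
    intro i
    split_ifs with h1 h2 h2
    · subst h2; simp [ev]
    · simp [ev, Ne.symm h2]
    · subst h2; simp [ev]
    · simp [ev, Ne.symm h2]
  simp [this]

lemma nb_inj (y : V d) : Function.Injective (nb y) := by
  rintro ⟨i, b⟩ ⟨j, b'⟩ h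
  have hi := congrFun h i
  have hj := congrFun h j
  by_cases hij : i = j
  · subst hij
    cases b <;> cases b' <;> simp_all [nb, ev] <;> omega
  · have hij' := Ne.symm hij
    cases b <;> cases b' <;> simp [nb, ev, hij, hij'] at hi hj

lemma sum_nb (f : V d → ℝ) (y : V d) : ∑ p, f (nb y p) = ∑ i, (f (y + ev i) + f (y - ev i)) := by
  rw [Fintype.sum_prod_type]
  apply Finset.sum_congr rfl
  intro i _
  simp [nb]

/-- cylinder -/
def cyl (γ : ℕ → V d) (k : ℕ) : Set (ℕ → V d) := {ω | ∀ i ≤ k, ω i = γ i}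

lemma meas_cyl (γ : ℕ → V d) (k : ℕ) : MeasurableSet (cyl γ k) := by
  have : cyl γ k = ⋂ i, ⋂ (_ : i ≤ k), {ω | ω i ∈ ({γ i} : Set (V d))} := by
    ext ω; simp [cyl]
  rw [this]
  exact MeasurableSet.iInter fun i => MeasurableSet.iInter fun _ => meas_coord i _

/-- extension of a path -/
def ext1 (γ : ℕ → V d) (k : ℕ) (p : Fin d × Bool) : ℕ → V d :=
  fun j => if j ≤ k then γ j else nb (γ k) p

lemma cyl_split (hd : 0 < d) (ν : Measure (ℕ → V d)) (x : V d) (hν : IsSRWLaw ν x) (k : ℕ) (γ : ℕ → V d)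
    (h0 : γ 0 = x) (hγ : ∀ i < k, adj (γ i) (γ (i+1))) (E : Set (ℕ → V d)) (hE : MeasurableSet E) :
    ν (cyl γ k ∩ E) = ∑ p : Fin d × Bool, ν (cyl (ext1 γ k p) (k+1) ∩ E) := by
  have := hν.1
  have hadj : ∀ p, ∀ i < k + 1, adj (ext1 γ k p i) (ext1 γ k p (i+1)) := by
    intro p i hi
    rcases Nat.lt_succ_iff_lt_or_eq.1 hi with h | h
    · have h2 : i + 1 ≤ k := h
      simp only [ext1, h2, h.le, if_true]
      exact hγ i h
    · subst h
      simp [ext1, nb_adj]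
  have hdisj : Pairwise (Function.onFun Disjoint fun p => cyl (ext1 γ k p) (k+1)) := by
    intro p q hpq
    rw [Function.onFun, Set.disjoint_left]
    intro ω h1 h2
    have a1 := h1 (k+1) le_rfl
    have a2 := h2 (k+1) le_rfl
    simp [ext1] at a1 a2
    exact hpq (nb_inj _ (a1.symm.trans a2))
  have hsub : ∀ p, cyl (ext1 γ k p) (k+1) ⊆ cyl γ k := by
    intro p ω h i hi
    have := h i (by omega)
    simpa [ext1, hi] using this
  have hU : ν (⋃ p, cyl (ext1 γ k p) (k+1)) = ν (cyl γ k) := by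
    rw [measure_iUnion hdisj (fun p => meas_cyl _ _), tsum_fintype]
    have e1 : ∀ p, ν (cyl (ext1 γ k p) (k+1)) = (2 * (d : ℝ≥0∞))⁻¹ ^ (k+1) := fun p =>
      hν.2 (k+1) (ext1 γ k p) (by simp [ext1, h0]) (hadj p)
    have e2 : ν (cyl γ k) = (2 * (d : ℝ≥0∞))⁻¹ ^ k := hν.2 k γ h0 hγ
    rw [e2]
    simp only [e1, Finset.sum_const, Finset.card_univ, Fintype.card_prod, Fintype.card_fin, Fintype.card_bool,
      nsmul_eq_mul, pow_succ]
    rw [mul_comm, mul_assoc]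
    push_cast
    rw [mul_comm (d : ℝ≥0∞) 2, ENNReal.inv_mul_cancel, mul_one]
    · simp; omega
    · exact ENNReal.mul_ne_top (by simp) (by simp)
  have hae : (⋃ p, cyl (ext1 γ k p) (k+1)) =ᵐ[ν] cyl γ k :=
    ae_eq_of_subset_of_measure_ge (Set.iUnion_subset hsub) hU.ge
      (MeasurableSet.iUnion fun p => meas_cyl _ _).nullMeasurableSet (measure_ne_top _ _)
  have hae2 : ((⋃ p, cyl (ext1 γ k p) (k+1)) ∩ E : Set _) =ᵐ[ν] (cyl γ k ∩ E : Set _) :=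
    hae.inter (ae_eq_refl _)
  rw [← measure_congr hae2, Set.iUnion_inter, measure_iUnion, tsum_fintype]
  · intro p q hpq
    exact (hdisj hpq).mono Set.inter_subset_left Set.inter_subset_left
  · exact fun p => (meas_cyl _ _).inter hE

lemma meas_shift (k : ℕ) : Measurable (fun (ω : ℕ → V d) (j : ℕ) => ω (j + k)) :=
  measurable_pi_lambda _ fun j => measurable_pi_apply (j + k)

lemma law_good (hd : 0 < d) (ν : Measure (ℕ → V d)) (x : V d) (hν : IsSRWLaw ν x) (W A : Set (V d))
    (t : ℕ) : ∀ (k : ℕ) (γ : ℕ → V d),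
    γ 0 = x → (∀ i < k, adj (γ i) (γ (i+1))) →
    ν (cyl γ k ∩ {ω | good W A t (fun j => ω (j + k))}) = 
      ENNReal.ofReal (((2 * d : ℝ)⁻¹) ^ k * ap W A t (γ k)) := by
  have hd' : (0:ℝ) < d := by positivity
  have hc : ∀ (k : ℕ) (γ : ℕ → V d), γ 0 = x → (∀ i < k, adj (γ i) (γ (i+1))) →
      ν (cyl γ k) = ENNReal.ofReal (((2 * d : ℝ)⁻¹) ^ k) := by
    intro k γ h0 hγ
    rw [show ν (cyl γ k) = _ from hν.2 k γ h0 hγ, ENNReal.ofReal_pow (by positivity),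
      ENNReal.ofReal_inv_of_pos (by positivity), ENNReal.ofReal_mul (by norm_num)]
    simp
  induction t with
  | zero =>
    intro k γ h0 hγ
    by_cases h : γ k ∈ A
    · rw [ap_mem _ _ _ _ h]
      convert measure_empty (μ := ν)
      · ext ω
        simp only [Set.mem_inter_iff, Set.mem_ofPred_eq, good, Set.mem_empty_iff_false, iff_false, not_and, not_not, zero_add]
        intro hω
        rwa [hω k le_rfl]
      · simp
    · have : cyl γ k ∩ {ω | good W A 0 (fun j => ω (j + k))} = cyl γ k := by
        apply Set.inter_eq_left.2
        intro ω hω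
        simp only [Set.mem_ofPred_eq, good, zero_add]
        rwa [hω k le_rfl]
      rw [this, hc k γ h0 hγ]
      simp [ap, h]
  | succ t ih =>
    intro k γ h0 hγ
    by_cases h : γ k ∈ A
    · rw [ap_mem _ _ _ _ h]
      convert measure_empty (μ := ν)
      · ext ω
        simp only [Set.mem_inter_iff, Set.mem_ofPred_eq, good, Set.mem_empty_iff_false, iff_false, not_and, zero_add]
        intro hω h2
        rw [hω k le_rfl] at h2
        exact absurd h h2
      · simp
    by_cases hW : γ k ∈ W
    · have e1 : cyl γ k ∩ {ω | good W A (t+1) (fun j => ω (j + k))} = 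
         cyl γ k ∩ {ω | good W A t (fun j => ω (j + (k+1)))} := by
        ext ω
        simp only [Set.mem_inter_iff, Set.mem_ofPred_eq, good, zero_add, and_congr_right_iff]
        intro hω
        rw [hω k le_rfl]
        have : (fun j => ω (j + 1 + k)) = (fun j => ω (j + (k+1))) := by
          funext j; congr 1; omega
        rw [this]
        tauto
      have hm : MeasurableSet {ω : ℕ → V d | good W A t (fun j => ω (j + (k+1)))} :=
        meas_shift (k+1) (meas_good W A t)
      rw [e1, cyl_split hd ν x hν k γ h0 hγ _ hm]
      have e2 : ∀ p : Fin d × Bool, ν (cyl (ext1 γ k p) (k+1) ∩ {ω | good W A t (fun j => ω (j + (k+1)))}) =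
          ENNReal.ofReal (((2 * d : ℝ)⁻¹) ^ (k+1) * ap W A t (nb (γ k) p)) := by
        intro p
        rw [ih (k+1) (ext1 γ k p) (by simp [ext1, h0])]
        · simp [ext1]
        · intro i hi
          rcases Nat.lt_succ_iff_lt_or_eq.1 hi with h | h
          · have h2 : i + 1 ≤ k := h
            simp only [ext1, h2, h.le, if_true]
            exact hγ i h
          · subst h
            simp [ext1, nb_adj]
      rw [Finset.sum_congr rfl (fun p _ => e2 p), ← ENNReal.ofReal_sum_of_nonneg]
      · congr 1
        rw [← Finset.mul_sum, sum_nb]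
        simp only [ap, h, hW, if_true, if_false, av]
        rw [pow_succ]
        field_simp
      · intro p _
        have := ap_nonneg W A t (nb (γ k) p)
        positivity
    · have : cyl γ k ∩ {ω | good W A (t+1) (fun j => ω (j + k))} = cyl γ k := by
        apply Set.inter_eq_left.2
        intro ω hω
        simp only [Set.mem_ofPred_eq, good, zero_add]
        rw [hω k le_rfl]
        exact ⟨h, fun h => absurd h hW⟩
      rw [this, hc k γ h0 hγ]
      simp [ap, h, hW]

lemma law_good0 (hd : 0 < d) (ν : Measure (ℕ → V d)) (x : V d) (hν : IsSRWLaw ν x) (W A : Set (V d))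
    (t : ℕ) : ν {ω | good W A t ω} = ENNReal.ofReal (ap W A t x) := by
  have := hν.1
  have h := law_good hd ν x hν W A t 0 (fun _ => x) rfl (by simp)
  simp only [add_zero, pow_zero, one_mul] at h
  rw [← h]
  have h1 : ν (cyl (fun _ => x) 0) = 1 := by
    have := hν.2 0 (fun _ => x) rfl (by simp)
    simpa [cyl] using this
  have h2 : (cyl (fun _ => x) 0 : Set _) =ᵐ[ν] Set.univ := by
    rw [ae_eq_univ, prob_compl_eq_zero_iff (meas_cyl _ _)]
    exact h1
  have h3 : (cyl (fun _ => x) 0 ∩ {ω | good W A t ω} : Set _) =ᵐ[ν] (Set.univ ∩ {ω | good W A t ω} : Set _) :=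
    h2.inter (ae_eq_refl _)
  rw [measure_congr h3, Set.univ_inter]

lemma good_of (W A : Set (V d)) (t : ℕ) : ∀ ω : ℕ → V d,
    (∀ j, (∀ i < j, ω i ∈ W) → ω j ∉ A) → good W A t ω := by
  induction t with
  | zero => intro ω h; exact h 0 (by simp)
  | succ t ih =>
    intro ω h
    refine ⟨h 0 (by simp), fun hW => ih _ ?_⟩
    intro j hj
    apply h (j+1)
    intro i hi
    cases i with
    | zero => exact hW
    | succ i => exact hj i (by omega)

lemma good_anti (W A : Set (V d)) (t : ℕ) : ∀ ω : ℕ → V d, good W A (t+1) ω → good W A t ω := by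
  induction t with
  | zero => intro ω h; exact h.1
  | succ t ih => intro ω h; exact ⟨h.1, fun hW => ih _ (h.2 hW)⟩

lemma of_good (A : Set (V d)) (t : ℕ) : ∀ ω : ℕ → V d, good Set.univ A t ω → ∀ j ≤ t, ω j ∉ A := by
  induction t with
  | zero => intro ω h j hj; obtain rfl : j = 0 := by omega
            exact h
  | succ t ih =>
    intro ω h j hj
    cases j with
    | zero => exact h.1
    | succ j => exact ih _ (h.2 (Set.mem_univ _)) j (by omega)

lemma le_exit_of (D : Set (V d)) (ω : ℕ → V d) (j : ℕ) (h : ∀ i < j, ω i ∈ D) : 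
    (j : ENat) ≤ exitTimeE D ω := by
  unfold exitTimeE
  split_ifs with h1
  · rw [Nat.cast_le, Nat.le_find_iff]
    intro m hm
    simpa using h m hm
  · exact le_top

lemma le_exit_iff (D : Set (V d)) (ω : ℕ → V d) (j : ℕ) : 
    (j : ENat) ≤ exitTimeE D ω ↔ ∀ i < j, ω i ∈ D := by
  refine ⟨?_, le_exit_of D ω j⟩
  unfold exitTimeE
  split_ifs with h1
  · rw [Nat.cast_le, Nat.le_find_iff]
    intro h m hm
    simpa using h m hm
  · intro _ i _
    push Not at h1
    exact h1 i

lemma meas_avoid (D A : Set (V d)) : MeasurableSet {ω : ℕ → V d | avoidBeforeExit D A ω} := by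
  have : {ω : ℕ → V d | avoidBeforeExit D A ω} = ⋂ j : ℕ, ((⋂ i : ℕ, ⋂ (_ : i < j), {ω | ω i ∈ D})ᶜ ∪ {ω | ω j ∈ A}ᶜ) := by
    ext ω
    simp only [avoidBeforeExit, le_exit_iff, Set.mem_ofPred_eq, Set.mem_iInter, Set.mem_union, Set.mem_compl_iff]
    exact forall_congr' fun j => imp_iff_not_or
  rw [this]
  refine MeasurableSet.iInter fun j => ((MeasurableSet.iInter fun i => MeasurableSet.iInter fun _ => meas_coord i D).compl).union (meas_coord j A).compl

lemma upper_law (hd : 0 < d) (ν : Measure (ℕ → V d)) (x : V d) (hν : IsSRWLaw ν x) (W D A : Set (V d))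
    (hWD : W ⊆ D) : (ν {ω | avoidBeforeExit D A ω}).toReal ≤ al W A x := by
  have := hν.1
  apply le_al
  intro t
  apply ENNReal.toReal_le_of_le_ofReal (ap_nonneg _ _ _ _)
  rw [← law_good0 hd ν x hν W A t]
  apply measure_mono
  intro ω hω
  apply good_of
  intro j hj
  exact hω j ((le_exit_iff D ω j).2 fun i hi => hWD (hj i hi))

lemma lower_law (hd : 0 < d) (ν : Measure (ℕ → V d)) (x : V d) (hν : IsSRWLaw ν x) (D A B : Set (V d)) :
    al Set.univ (A ∪ B) x ≤ (ν ({ω | avoidBeforeExit D A ω} ∩ {ω | avoidBeforeExit D B ω})).toReal := by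
  have := hν.1
  have hsub : (⋂ t, {ω | good Set.univ (A ∪ B) t ω}) ⊆ {ω | avoidBeforeExit D A ω} ∩ {ω | avoidBeforeExit D B ω} := by
    intro ω hω
    rw [Set.mem_iInter] at hω
    exact ⟨fun j _ h => of_good _ j ω (hω j) j le_rfl (Or.inl h), fun j _ h => of_good _ j ω (hω j) j le_rfl (Or.inr h)⟩
  have hanti : Antitone fun t => {ω | good Set.univ (A ∪ B) t ω} := 
    antitone_nat_of_succ_le fun t ω hω => good_anti _ _ t ω hω
  have hlim := tendsto_measure_iInter_atTop (μ := ν)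
    (fun t => (meas_good Set.univ (A ∪ B) t).nullMeasurableSet) hanti ⟨0, measure_ne_top _ _⟩
  have h1 : ENNReal.ofReal (al Set.univ (A ∪ B) x) ≤ ν (⋂ t, {ω | good Set.univ (A ∪ B) t ω}) := by
    refine ge_of_tendsto' hlim fun t => ?_
    rw [Function.comp_apply, law_good0 hd ν x hν]
    exact ENNReal.ofReal_le_ofReal (al_le_ap _ _ t _)
  rw [← ENNReal.ofReal_le_iff_le_toReal (measure_ne_top _ _)]
  exact h1.trans (measure_mono hsub)

/-- squared Euclidean norm -/
noncomputable def nsq (x : V d) : ℝ := ∑ i, (x i : ℝ) ^ 2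

lemma nsq_nonneg (x : V d) : 0 ≤ nsq x := Finset.sum_nonneg fun i _ => sq_nonneg _

lemma sq_le_nsq (x : V d) (i : Fin d) : (x i : ℝ) ^ 2 ≤ nsq x :=
  Finset.single_le_sum (f := fun i => (x i : ℝ) ^ 2) (fun i _ => sq_nonneg _) (Finset.mem_univ i)

lemma nsq_le (x : V d) (r : ℝ) (h : ∀ i, |(x i : ℝ)| ≤ r) : nsq x ≤ d * r ^ 2 := by
  unfold nsq
  calc _ ≤ ∑ _i : Fin d, r ^ 2 := Finset.sum_le_sum fun i _ => sq_le_sq' (by linarith [(abs_le.1 (h i)).1]) (abs_le.1 (h i)).2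
    _ = _ := by simp

lemma nsq_add (x : V d) (i : Fin d) : nsq (x + ev i) = nsq x + 1 + 2 * x i := by
  unfold nsq
  have : ∀ j, (((x + ev i) j : ℤ) : ℝ) ^ 2 = (x j : ℝ) ^ 2 + if i = j then 1 + 2 * (x i : ℝ) else 0 := by
    intro j
    split_ifs with h
    · subst h; simp [ev]; ring
    · simp [ev, Ne.symm h]
  simp only [this, Finset.sum_add_distrib, Finset.sum_ite_eq, Finset.mem_univ, if_true]
  ring

lemma nsq_sub (x : V d) (i : Fin d) : nsq (x - ev i) = nsq x + 1 - 2 * x i := by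
  unfold nsq
  have : ∀ j, (((x - ev i) j : ℤ) : ℝ) ^ 2 = (x j : ℝ) ^ 2 + if i = j then 1 - 2 * (x i : ℝ) else 0 := by
    intro j
    split_ifs with h
    · subst h; simp [ev]; ring
    · simp [ev, Ne.symm h]
  simp only [this, Finset.sum_add_distrib, Finset.sum_ite_eq, Finset.mem_univ, if_true]
  ring

/-- radial profile of the superharmonic barrier -/
noncomputable def phi (s : ℝ) : ℝ := (s + 1600) ^ (-(1/3) : ℝ)

lemma phi_pos {s : ℝ} (hs : 0 ≤ s) : 0 < phi s := Real.rpow_pos_of_pos (by linarith) _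

lemma phi_anti {s t : ℝ} (hs : 0 ≤ s) (h : s ≤ t) : phi t ≤ phi s := 
  Real.rpow_le_rpow_of_nonpos (by linarith) (by linarith) (by norm_num)

lemma phi_cube {s : ℝ} (hs : 0 ≤ s) : phi s ^ 3 * (s + 1600) = 1 := by
  unfold phi
  rw [← Real.rpow_natCast, ← Real.rpow_mul (by linarith)]
  norm_num
  rw [Real.rpow_neg_one]
  field_simp

lemma cube_cmp {a q y : ℝ} (ha : 0 ≤ a) (hq : 0 ≤ q) (hy : 0 < y) (h : a ^ 3 * y ≤ q ^ 3 * y) : a ≤ q := by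
  have h2 : a ^ 3 ≤ q ^ 3 := le_of_mul_le_mul_right h hy
  exact le_of_pow_le_pow_left₀ (by norm_num) hq h2

lemma poly1 {t : ℝ} (h : |t| ≤ 1/20) : 1 ≤ (1 - t/3 + t^2/4)^3 * (1 + t) := by
  obtain ⟨h1, h2⟩ := abs_le.1 h
  have e : (1 - t/3 + t^2/4)^3 * (1 + t) = 1 + t^2 * (1/12 + t*(59/108) - t^2*(115/432) + t^3*(5/24) - t^4*(3/64) + t^5/64) := by ring
  have a2 : t^2 ≤ 1/400 := by nlinarith
  have b2 : 0 ≤ t^2 := sq_nonneg t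
  have a4 : t^4 ≤ 1/400 := by nlinarith
  have b3 : -(1/400) ≤ t^3 := by nlinarith
  have b5 : -(1/400) ≤ t^5 := by nlinarith [sq_nonneg (t^2)]
  rw [e]
  have : 0 ≤ t^2 * (1/12 + t*(59/108) - t^2*(115/432) + t^3*(5/24) - t^4*(3/64) + t^5/64) := mul_nonneg b2 (by linarith)
  linarith

lemma poly2 {s : ℝ} (h0 : 0 ≤ s) (h1 : s ≤ 1) : (1 + s/3)^3 * (1 - s) ≤ 1 := by
  nlinarith [mul_nonneg h0 h0, mul_nonneg (mul_nonneg h0 h0) h0, mul_nonneg (mul_nonneg (mul_nonneg h0 h0) h0) h0]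

lemma phi_pert {s a : ℝ} (hs : 0 ≤ s) (hsa : 0 ≤ s + 1 + a) (t : ℝ) (ht : a = t * (s + 1601)) (h : |t| ≤ 1/20) :
    phi (s + 1 + a) ≤ phi (s + 1) * (1 - t/3 + t^2/4) := by
  obtain ⟨h1, h2⟩ := abs_le.1 h
  have hq : 0 < 1 - t/3 + t^2/4 := by nlinarith
  have e : s + 1 + a + 1600 = (s + 1 + 1600) * (1 + t) := by rw [ht]; ring
  have p1 := phi_cube hsa
  have p2 := phi_cube (s := s + 1) (by linarith)
  apply cube_cmp (phi_pos hsa).le (mul_nonneg (phi_pos (by linarith)).le hq.le) (y := s + 1 + a + 1600) (by linarith)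
  rw [p1, e]
  calc (1:ℝ) ≤ 1 * ((1 - t/3 + t^2/4)^3 * (1 + t)) := by rw [one_mul]; exact poly1 h
    _ = (phi (s+1)^3*(s+1+1600)) * ((1-t/3+t^2/4)^3*(1+t)) := by rw [p2]
    _ = _ := by ring

lemma phi_super (hd : 3 ≤ d) (x : V d) : av (fun y => phi (nsq y)) x ≤ phi (nsq x) := by
  have hd0 : (3:ℝ) ≤ d := by exact_mod_cast hd
  set s := nsq x with hs
  have hs0 : 0 ≤ s := nsq_nonneg x
  set u := s + 1601 with hu
  have hupos : 0 < u := by linarith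
  set P := phi (s + 1) with hP
  have hPpos : 0 < P := phi_pos (by linarith)
  have hsum : ∑ i, (phi (nsq (x + ev i)) + phi (nsq (x - ev i))) ≤ ∑ i, P * (2 + (2 * (x i : ℝ) / u)^2 / 2) := by
    apply Finset.sum_le_sum
    intro i _
    set t := 2 * (x i : ℝ) / u with ht
    have hx := sq_le_nsq x i
    rw [← hs] at hx
    have htu : t * u = 2 * x i := by rw [ht]; field_simp
    have htabs : |t| ≤ 1/20 := by
      rw [← sq_le_sq₀ (abs_nonneg _) (by norm_num), sq_abs]
      have : t^2 * u^2 = 4 * (x i : ℝ)^2 := by rw [← mul_pow, htu]; ring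
      by_contra hcon
      push Not at hcon
      nlinarith
    have a1 := phi_pert (s := s) (a := 2 * x i) hs0 (by rw [← nsq_add x i]; exact nsq_nonneg _) t htu.symm htabs
    have a2 := phi_pert (s := s) (a := -(2 * x i)) hs0 (by rw [← sub_eq_add_neg, ← nsq_sub x i]; exact nsq_nonneg _) (-t) (by linarith) (by rwa [abs_neg])
    rw [nsq_add, nsq_sub, ← hs]
    rw [← sub_eq_add_neg] at a2
    calc _ ≤ _ := add_le_add a1 a2
      _ = _ := by ring
  have hsum2 : ∑ i, P * (2 + (2 * (x i : ℝ) / u)^2 / 2) = P * (2 * d + 2 * s / u^2) := by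
    rw [← Finset.mul_sum, Finset.sum_add_distrib]
    congr 1
    simp only [Finset.sum_const, Finset.card_univ, Fintype.card_fin, nsmul_eq_mul]
    have : ∀ i, (2 * (x i : ℝ) / u)^2 / 2 = (2 / u^2) * (x i : ℝ)^2 := by intro i; field_simp; try ring
    simp only [this, ← Finset.mul_sum]
    rw [hs, nsq]; ring
  have h3 : P * (1 + (1/u)/3) ≤ phi s := by
    have hu1 : 1/u ≤ 1 := by rw [div_le_one hupos]; linarith
    apply cube_cmp (by positivity) (phi_pos hs0).le (y := s + 1600) (by linarith)
    rw [phi_cube hs0]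
    have p2 := phi_cube (s := s + 1) (by linarith)
    have e : s + 1600 = (s + 1 + 1600) * (1 - 1/u) := by
      have : s + 1 + 1600 = u := by rw [hu]; ring
      rw [this]; field_simp; rw [hu]; try ring
    rw [e]
    calc _ = (phi (s+1) ^ 3 * (s + 1 + 1600)) * ((1 + (1/u)/3)^3 * (1 - 1/u)) := by rw [hP]; ring
      _ ≤ 1 := by rw [p2, one_mul]; exact poly2 (by positivity) hu1
  unfold av
  rw [div_le_iff₀ (by linarith)]
  calc _ ≤ _ := hsum
    _ = _ := hsum2
    _ ≤ P * (1 + (1/u)/3) * (2 * d) := by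
      rw [mul_assoc]
      apply mul_le_mul_of_nonneg_left _ hPpos.le
      have : 2 * s / u^2 ≤ 2 / u := by
        rw [div_le_div_iff₀ (by positivity) hupos]; nlinarith
      have h4 : (1/u)/3 * (2 * d) ≥ 2 / u := by
        rw [ge_iff_le, div_le_iff₀ hupos]
        field_simp; linarith
      linarith
    _ ≤ _ := by apply mul_le_mul_of_nonneg_right h3; linarith

lemma ev_apply (i j : Fin d) : (ev i : V d) j = if j = i then 1 else 0 := by
  simp [ev, Pi.single_apply]

lemma maxp2 (hd : 0 < d) (U : Set (V d)) (hU : U.Finite) (w : V d → ℝ)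
    (hw : ∀ x ∈ U, w x ≤ av w x)
    (hb : ∀ x ∈ U, ∀ y : V d, (∀ j, y j ≤ x j + 1 ∧ x j - 1 ≤ y j) → y ∉ U → w y ≤ 0) :
    ∀ x ∈ U, w x ≤ 0 := by
  apply maxp hd U hU w hw
  intro x hx i
  constructor
  · apply hb x hx
    intro j
    simp only [Pi.add_apply, ev_apply]
    split_ifs <;> omega
  · apply hb x hx
    intro j
    simp only [Pi.sub_apply, ev_apply]
    split_ifs <;> omega

lemma mem_cube {x y : V d} {r : ℕ} : y ∈ cube x r ↔ ∀ i, y i ≤ x i + r ∧ x i - r ≤ y i := by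
  simp only [cube, Set.mem_ofPred_eq, abs_le]
  constructor
  · intro h i; have := h i; omega
  · intro h i; have := h i; omega

lemma av_refl0 (f : V d → ℝ) (i0 : Fin d) (c : ℤ) (x : V d) :
    av (fun y => f (refl0 i0 c y)) x = av f (refl0 i0 c x) := by
  unfold av
  congr 1
  apply Finset.sum_congr rfl
  intro i _
  beta_reduce
  by_cases hi : i = i0
  · subst hi
    have r1 : refl0 i c (x + ev i) = refl0 i c x - ev i := by
      ext j
      by_cases hj : j = i
      · subst hj; simp [refl0, ev]; ring
      · simp [refl0, ev, hj]
    have r2 : refl0 i c (x - ev i) = refl0 i c x + ev i := by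
      ext j
      by_cases hj : j = i
      · subst hj; simp [refl0, ev]; ring
      · simp [refl0, ev, hj]
    rw [r1, r2]; ring
  · have r1 : refl0 i0 c (x + ev i) = refl0 i0 c x + ev i := by
      ext j
      by_cases hj : j = i0
      · subst hj; simp [refl0, ev, Pi.single_apply, Ne.symm hi]
      · simp [refl0, ev, hj]
    have r2 : refl0 i0 c (x - ev i) = refl0 i0 c x - ev i := by
      ext j
      by_cases hj : j = i0
      · subst hj; simp [refl0, ev, Pi.single_apply, Ne.symm hi]
      · simp [refl0, ev, hj]
    rw [r1, r2]

lemma refl0_apply (i0 : Fin d) (c : ℤ) (x : V d) (i : Fin d) : 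
    refl0 i0 c x i = if i = i0 then 2 * c - x i0 else x i := by
  simp [refl0, Function.update_apply]

/-- barrier for the gradient estimate -/
noncomputable def gbar (j : Fin d) (S : ℝ) (w : V d) : ℝ := nsq w - d * (w j : ℝ) ^ 2 + d * S * (w j : ℝ)

lemma gbar_harm (hd : 0 < d) (j : Fin d) (S : ℝ) (w : V d) : av (gbar j S) w = gbar j S w := by
  have hd' : (0:ℝ) < d := by positivity
  unfold av
  rw [div_eq_iff (by positivity)]
  have : ∀ i, gbar j S (w + ev i) + gbar j S (w - ev i) = 2 * gbar j S w + 2 - if i = j then 2 * (d:ℝ) else 0 := by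
    intro i
    unfold gbar
    rw [nsq_add, nsq_sub]
    simp only [Pi.add_apply, Pi.sub_apply, ev_apply]
    by_cases h : j = i
    · subst h; simp; ring
    · simp [h, Ne.symm h]; ring
  simp only [this, Finset.sum_sub_distrib, Finset.sum_ite_eq', Finset.mem_univ, if_true]
  simp; ring

lemma grad (hd : 0 < d) (u : V d → ℝ) (x : V d) (s : ℕ) (M : ℝ) 
    (hh : ∀ y ∈ cube x s, u y = av u y) (h0 : ∀ y ∈ cube x (s+1), 0 ≤ u y) 
    (h1 : ∀ y ∈ cube x (s+1), u y ≤ M) (j : Fin d) :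
    u (x + ev j) - u (x - ev j) ≤ M * d / (s + 1) := by
  have hd' : (1:ℝ) ≤ d := by exact_mod_cast hd
  have hxc : x ∈ cube x (s+1) := by rw [mem_cube]; intro i; omega
  have hM : 0 ≤ M := (h0 x hxc).trans (h1 x hxc)
  set S : ℝ := (s:ℝ) + 1 with hS
  have hSpos : 1 ≤ S := by rw [hS]; linarith [Nat.cast_nonneg (α := ℝ) s]
  have key := maxp2 hd {w | w ∈ cube x s ∧ x j + 1 ≤ w j} ((cube_finite x s).subset (fun w hw => hw.1))
    (fun w => (u w - u (refl0 j (x j) w)) - (M / S^2) * gbar j S (w - x)) ?_ ?_ (x + ev j)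
  · have e1 : refl0 j (x j) (x + ev j) = x - ev j := by
      ext i; rw [refl0_apply]; simp only [Pi.add_apply, Pi.sub_apply, ev_apply]
      by_cases h : i = j
      · subst h; simp; ring
      · simp [h]
    by_cases hs : s = 0
    · subst hs
      have a1 : u (x + ev j) ≤ M := h1 _ (by rw [mem_cube]; intro i; simp only [Pi.add_apply, ev_apply]; split_ifs <;> omega)
      have a2 : 0 ≤ u (x - ev j) := h0 _ (by rw [mem_cube]; intro i; simp only [Pi.sub_apply, ev_apply]; split_ifs <;> omega)
      have : S = 1 := by rw [hS]; simp
      rw [this, div_one]; nlinarith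
    have key' := key ⟨by rw [mem_cube]; intro i; simp only [Pi.add_apply, ev_apply]; split_ifs <;> omega, by simp [ev_apply]⟩
    beta_reduce at key'
    rw [e1] at key'
    have e2 : gbar j S (x + ev j - x) = 1 - d + d * S := by
      unfold gbar
      have : x + ev j - x = ev j := by abel
      rw [this]
      have : nsq (ev j : V d) = 1 := by
        have := nsq_add (0 : V d) j
        rw [zero_add] at this
        rw [this]; simp [nsq]
      rw [this]; simp [ev_apply]
    rw [e2] at key'
    have : M / S^2 * (1 - d + d * S) ≤ M * d / S := by
      have e : M * d / S = M / S^2 * (d * S) := by field_simp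
      rw [e]
      apply mul_le_mul_of_nonneg_left _ (by positivity)
      linarith
    linarith
  · intro w hw
    obtain ⟨hw1, hw2⟩ := hw
    rw [av_sub, av_sub, av_smul, av_shift, gbar_harm hd, av_refl0, ← hh _ hw1, ← hh]
    rw [mem_cube] at hw1 ⊢
    intro i; have := hw1 i; have := hw1 j
    rw [refl0_apply]; split_ifs with h
    · subst h; omega
    · omega
  · intro w hw y hy hyU
    obtain ⟨hw1, hw2⟩ := hw
    have hyj := hy j
    rw [mem_cube] at hw1
    have hyc : y ∈ cube x (s+1) := by
      rw [mem_cube]; intro i; have := hw1 i; have := hy i; omega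
    have hyr : refl0 j (x j) y ∈ cube x (s+1) := by
      rw [mem_cube] at hyc ⊢
      intro i; have := hyc i; have := hyc j
      rw [refl0_apply]; split_ifs with h
      · subst h; omega
      · omega
    by_cases hj : y j = x j
    · have : refl0 j (x j) y = y := by
        ext i; rw [refl0_apply]; split_ifs with h
        · subst h; omega
        · rfl
      rw [this]
      have : 0 ≤ gbar j S (y - x) := by
        unfold gbar
        have : (((y - x) j : ℤ) : ℝ) = 0 := by simp [hj]
        rw [this]; simpa using nsq_nonneg (y - x)
      have := mul_nonneg (show 0 ≤ M / S^2 by positivity) this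
      linarith
    · have hyj2 : x j + 1 ≤ y j := by omega
      have : ∃ i, (((y - x) i : ℤ) : ℝ) ^ 2 = S ^ 2 := by
        by_contra hcon
        push Not at hcon
        apply hyU
        refine ⟨?_, hyj2⟩
        rw [mem_cube] at hyc ⊢
        intro i
        have h1 := hyc i
        have h2 := hcon i
        by_contra hc
        apply h2
        have : (y - x) i = s + 1 ∨ (y - x) i = -(s + 1) := by
          simp only [Pi.sub_apply]; omega
        rcases this with h | h <;> rw [h, hS] <;> push_cast <;> ring
      obtain ⟨i, hi⟩ := this
      set τ : ℝ := (((y - x) j : ℤ) : ℝ) with hτ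
      have t1 : 1 ≤ τ := by
        rw [hτ]; simp only [Pi.sub_apply]; exact_mod_cast (by omega : 1 ≤ y j - x j)
      have t2 : τ ≤ S := by
        rw [mem_cube] at hyc
        have := hyc j
        rw [hτ, hS]; simp only [Pi.sub_apply]; exact_mod_cast (by omega : y j - x j ≤ s + 1)
      have hge : S^2 ≤ gbar j S (y - x) := by
        unfold gbar
        rw [← hτ]
        by_cases hij : i = j
        · subst hij
          have : τ = S := by
            rw [← hτ] at hi
            exact (sq_eq_sq₀ (by linarith) (by linarith)).1 hi
          have := sq_le_nsq (y - x) i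
          rw [hi] at this
          rw [‹τ = S›]
          nlinarith
        · have : S^2 + τ^2 ≤ nsq (y - x) := by
            rw [← hi, hτ]
            unfold nsq
            have := Finset.sum_le_sum_of_subset_of_nonneg (Finset.subset_univ {i, j}) 
              (f := fun i => (((y - x) i : ℤ) : ℝ) ^ 2) (fun i _ _ => sq_nonneg _)
            rwa [Finset.sum_pair hij] at this
          nlinarith [mul_nonneg (show (0:ℝ) ≤ d - 1 by linarith) (show 0 ≤ τ * (S - τ) by nlinarith), mul_nonneg (show (0:ℝ) ≤ τ by linarith) (show 0 ≤ (S - τ) by linarith)]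
      have : M ≤ M / S^2 * gbar j S (y - x) := by
        calc M = M / S^2 * S^2 := by field_simp
          _ ≤ _ := mul_le_mul_of_nonneg_left hge (by positivity)
      linarith [h1 _ hyc, h0 _ hyr]

lemma grad2 (hd : 0 < d) (u : V d → ℝ) (x : V d) (s : ℕ) (M : ℝ) 
    (hh : ∀ y ∈ cube x s, u y = av u y) (h0 : ∀ y ∈ cube x (s+1), 0 ≤ u y) 
    (h1 : ∀ y ∈ cube x (s+1), u y ≤ M) (j : Fin d) :
    u (x - ev j) - u (x + ev j) ≤ M * d / (s + 1) := by
  have := grad hd (fun y => M - u y) x s M ?_ ?_ ?_ j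
  · beta_reduce at this; linarith
  · intro y hy
    rw [av_sub, av_const hd, hh y hy]
  · intro y hy; linarith [h1 y hy]
  · intro y hy; linarith [h0 y hy]

/-- ell-one norm -/
def l1 (κ : V d) : ℕ := ∑ i, (κ i).natAbs

lemma l1_le (κ : V d) (r : ℕ) (h : ∀ i, (κ i).natAbs ≤ r) : l1 κ ≤ d * r := by
  unfold l1
  calc _ ≤ ∑ _i : Fin d, r := Finset.sum_le_sum fun i _ => h i
    _ = _ := by simp

lemma le_l1 (κ : V d) (i : Fin d) : (κ i).natAbs ≤ l1 κ :=
  Finset.single_le_sum (f := fun i => (κ i).natAbs) (fun _ _ => Nat.zero_le _) (Finset.mem_univ i)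

lemma l1_step (κ : V d) (h : l1 κ ≠ 0) : ∃ i, l1 (κ - ev i) + 1 = l1 κ ∨ l1 (κ + ev i) + 1 = l1 κ := by
  have : ∃ i, κ i ≠ 0 := by
    by_contra hc
    push Not at hc
    apply h; unfold l1; simp [hc]
  obtain ⟨i, hi⟩ := this
  refine ⟨i, ?_⟩
  unfold l1
  rw [← Finset.add_sum_erase _ _ (Finset.mem_univ i), ← Finset.add_sum_erase _ _ (Finset.mem_univ i),
    ← Finset.add_sum_erase (a := i) _ (fun j => ((κ + ev i) j).natAbs) (Finset.mem_univ i)]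
  have e1 : ∑ j ∈ Finset.univ.erase i, ((κ - ev i) j).natAbs = ∑ j ∈ Finset.univ.erase i, (κ j).natAbs := by
    apply Finset.sum_congr rfl; intro j hj
    simp [ev_apply, Finset.ne_of_mem_erase hj]
  have e2 : ∑ j ∈ Finset.univ.erase i, ((κ + ev i) j).natAbs = ∑ j ∈ Finset.univ.erase i, (κ j).natAbs := by
    apply Finset.sum_congr rfl; intro j hj
    simp [ev_apply, Finset.ne_of_mem_erase hj]
  rw [e1, e2]
  simp only [Pi.sub_apply, Pi.add_apply, ev_apply, if_true]
  omega

lemma chain (hd : 0 < d) (u : V d → ℝ) (y : V d) (R s : ℕ) (M : ℝ) 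
    (hh : ∀ w ∈ cube y R, u w = av u w) (h0 : ∀ w ∈ cube y (R+1), 0 ≤ u w) 
    (h1 : ∀ w ∈ cube y (R+1), u w ≤ M) (p : ℕ) : ∀ κ : V d, l1 κ = p → 2 * p + s ≤ R →
    u y - p * (M * d / (s + 1)) ≤ u (y + 2 • κ) := by
  induction p with
  | zero =>
    intro κ hκ _
    have : κ = 0 := by
      ext i; have := le_l1 κ i; simp only [Pi.zero_apply]; omega
    simp [this]
  | succ p ih =>
    intro κ hκ hR
    obtain ⟨i, hi | hi⟩ := l1_step κ (by omega)
    · have a := ih (κ - ev i) (by omega) (by omega)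
      have hb : ∀ j, ((κ - ev i) j).natAbs ≤ p := fun j => (le_l1 _ j).trans (by omega)
      have g := grad2 hd u (y + 2 • κ - ev i) s M ?_ ?_ ?_ i
      · have e1 : y + 2 • κ - ev i - ev i = y + 2 • (κ - ev i) := by rw [two_smul, two_smul]; abel
        have e2 : y + 2 • κ - ev i + ev i = y + 2 • κ := by abel
        rw [e1, e2] at g
        push_cast
        linarith
      all_goals
        intro w hw
        first | apply hh | apply h0 | apply h1
        rw [mem_cube] at hw ⊢
        intro j
        have hw' := hw j; have hb' := hb j
        have e2 : (2 • κ) j = 2 * κ j := by simp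
        simp only [Pi.add_apply, Pi.sub_apply, e2, ev_apply] at hw' hb'
        push_cast at hw' ⊢
        split_ifs at hw' hb' <;> omega
    · have a := ih (κ + ev i) (by omega) (by omega)
      have hb : ∀ j, ((κ + ev i) j).natAbs ≤ p := fun j => (le_l1 _ j).trans (by omega)
      have g := grad hd u (y + 2 • κ + ev i) s M ?_ ?_ ?_ i
      · have e1 : y + 2 • κ + ev i + ev i = y + 2 • (κ + ev i) := by rw [two_smul, two_smul]; abel
        have e2 : y + 2 • κ + ev i - ev i = y + 2 • κ := by abel
        rw [e1, e2] at g
        push_cast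
        linarith
      all_goals
        intro w hw
        first | apply hh | apply h0 | apply h1
        rw [mem_cube] at hw ⊢
        intro j
        have hw' := hw j; have hb' := hb j
        have e2 : (2 • κ) j = 2 * κ j := by simp
        simp only [Pi.add_apply, Pi.sub_apply, e2, ev_apply] at hw' hb'
        push_cast at hw' ⊢
        split_ifs at hw' hb' <;> omega

/-- paths of one-step Harnack moves -/
lemma onestep (hd : 0 < d) (u : V d → ℝ) (y : V d) (R : ℕ)
    (hh : ∀ w ∈ cube y R, u w = av u w) (h0 : ∀ w ∈ cube y (R+1), 0 ≤ u w) 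
    (p : ℕ) (hR : p ≤ R) : ∀ κ : V d, l1 κ = p → 
    u y ≤ (2 * d) ^ p * u (y + κ) := by
  induction p with
  | zero =>
    intro κ hκ
    have : κ = 0 := by
      ext i; have := le_l1 κ i; simp only [Pi.zero_apply]; omega
    simp [this]
  | succ p ih =>
    intro κ hκ
    have hc : ∀ j, (κ j).natAbs ≤ p + 1 := fun j => (le_l1 _ j).trans (by omega)
    have hmem : y + κ ∈ cube y R := by
      rw [mem_cube]; intro j; have := hc j; simp only [Pi.add_apply]; omega
    have hp : ∀ i, 0 ≤ u (y + κ + ev i) := fun i => h0 _ (by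
      rw [mem_cube]; intro j; have := hc j; simp only [Pi.add_apply, ev_apply]; split_ifs <;> omega)
    have hm : ∀ i, 0 ≤ u (y + κ - ev i) := fun i => h0 _ (by
      rw [mem_cube]; intro j; have := hc j; simp only [Pi.add_apply, Pi.sub_apply, ev_apply]; split_ifs <;> omega)
    have hpos : (0:ℝ) ≤ (2 * d) ^ p := by positivity
    obtain ⟨i, hi | hi⟩ := l1_step κ (by omega)
    · have a := ih (by omega) (κ - ev i) (by omega)
      have b := (av_ge_add hd hp hm i).2
      rw [← hh _ hmem] at b
      rw [← add_sub_assoc] at a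
      calc _ ≤ _ := a
        _ ≤ (2 * d) ^ p * (2 * d * u (y + κ)) := mul_le_mul_of_nonneg_left b hpos
        _ = _ := by ring
    · have a := ih (by omega) (κ + ev i) (by omega)
      have b := (av_ge_add hd hp hm i).1
      rw [← hh _ hmem] at b
      rw [← add_assoc] at a
      calc _ ≤ _ := a
        _ ≤ (2 * d) ^ p * (2 * d * u (y + κ)) := mul_le_mul_of_nonneg_left b hpos
        _ = _ := by ring

lemma Fk (t : ℝ) (ht : |t| < 1) (k : ℕ) : 
    2 + k * (k + 1) * t^2 ≤ ((1 + t)⁻¹)^k + ((1 - t)⁻¹)^k := by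
  obtain ⟨h1, h2⟩ := abs_lt.1 ht
  have p1 : 0 < 1 + t := by linarith
  have p2 : 0 < 1 - t := by linarith
  set a := (1 + t)⁻¹ with ha
  set b := (1 - t)⁻¹ with hb
  have ha0 : 0 < a := inv_pos.2 p1
  have hb0 : 0 < b := inv_pos.2 p2
  have hab : a + b = 2 * (a * b) := by rw [ha, hb]; field_simp; ring
  have hc : 1 + t^2 ≤ a * b := by
    rw [ha, hb, ← mul_inv, le_inv_comm₀ (by positivity) (by positivity), ← one_div, le_div_iff₀ (by positivity)]
    nlinarith [sq_nonneg (t^2)]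
  set c := a * b with hcdef
  have key : ∀ k : ℕ, (2 + k * (k + 1) * t^2 ≤ a^k + b^k) ∧ (2 * (k+1) * t^2 ≤ a^(k+1) + b^(k+1) - (a^k + b^k)) := by
    intro k
    induction k with
    | zero => constructor <;> norm_num <;> linarith
    | succ k ih =>
      obtain ⟨i1, i2⟩ := ih
      have q1 : 2 + ((k+1 : ℕ) : ℝ) * ((k+1 : ℕ) + 1) * t^2 ≤ a^(k+1) + b^(k+1) := by
        push_cast; nlinarith
      refine ⟨q1, ?_⟩
      have e : a^(k+2) + b^(k+2) - (a^(k+1)+b^(k+1)) = (c - 1) * (a^(k+1)+b^(k+1)) + c * (a^(k+1)+b^(k+1) - (a^k+b^k)) := by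
        have e1 : a^(k+2) + b^(k+2) = (a + b) * (a^(k+1)+b^(k+1)) - c * (a^k+b^k) := by rw [hcdef]; ring
        rw [e1, hab]; ring
      rw [show k + 1 + 1 = k + 2 by rfl, e]
      have hF : 2 ≤ a^(k+1) + b^(k+1) := by
        have : (0:ℝ) ≤ ((k+1 : ℕ) : ℝ) * ((k+1 : ℕ) + 1) * t^2 := by positivity
        linarith
      have r1 : t^2 * 2 ≤ (c - 1) * (a^(k+1)+b^(k+1)) := mul_le_mul (by linarith) hF (by norm_num) (by nlinarith [sq_nonneg t])
      have r2 : 2 * (k+1) * t^2 ≤ c * (a^(k+1)+b^(k+1) - (a^k+b^k)) := by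
        have : 0 ≤ a^(k+1)+b^(k+1) - (a^k+b^k) := le_trans (by positivity) i2
        nlinarith [sq_nonneg t]
      push_cast
      linarith
  exact (key k).1

lemma psi_sub (hd : 3 ≤ d) (x : V d) (hx : 4 * d ≤ nsq x) : 
    ((nsq x)⁻¹)^d ≤ av (fun y => ((nsq y)⁻¹)^d) x := by
  have hd0 : (3:ℝ) ≤ d := by exact_mod_cast hd
  set s := nsq x with hs
  have hs12 : 12 ≤ s := by linarith
  have hspos : 0 < s := by linarith
  have hvpos : 0 < s + 1 := by linarith
  have hterm : ∀ i, ((s+1)⁻¹)^d * (2 + d * (d + 1) * (2 * x i / (s+1))^2) ≤ 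
      ((nsq (x + ev i))⁻¹)^d + ((nsq (x - ev i))⁻¹)^d := by
    intro i
    set t := 2 * (x i : ℝ) / (s+1) with ht
    have hx := sq_le_nsq x i
    rw [← hs] at hx
    have htu : t * (s+1) = 2 * x i := by rw [ht]; field_simp
    have htabs : |t| < 1 := by
      rw [← sq_lt_sq₀ (abs_nonneg _) (by norm_num), sq_abs]
      have : t^2 * (s+1)^2 = 4 * (x i : ℝ)^2 := by rw [← mul_pow, htu]; ring
      by_contra hcon
      push Not at hcon
      nlinarith
    have e1 : nsq (x + ev i) = (s+1) * (1 + t) := by rw [nsq_add, ← hs]; linarith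
    have e2 : nsq (x - ev i) = (s+1) * (1 - t) := by rw [nsq_sub, ← hs]; linarith
    rw [e1, e2, mul_inv, mul_inv, mul_pow, mul_pow, ← mul_add]
    exact mul_le_mul_of_nonneg_left (Fk t htabs d) (by positivity)
  have hsum : ∑ i, ((s+1)⁻¹)^d * (2 + d * (d + 1) * (2 * (x i : ℝ) / (s+1))^2) = 
      ((s+1)⁻¹)^d * (2 * d + d * (d + 1) * 4 * s / (s+1)^2) := by
    rw [← Finset.mul_sum, Finset.sum_add_distrib]
    congr 1
    simp only [Finset.sum_const, Finset.card_univ, Fintype.card_fin, nsmul_eq_mul]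
    have : ∀ i, (d:ℝ) * (d + 1) * (2 * (x i : ℝ) / (s+1))^2 = (d * (d+1) * 4 / (s+1)^2) * (x i : ℝ)^2 := by 
      intro i; field_simp; try ring
    simp only [this, ← Finset.mul_sum]
    rw [hs, nsq]; ring
  unfold av
  rw [le_div_iff₀ (by linarith)]
  refine le_trans ?_ (Finset.sum_le_sum fun i _ => hterm i)
  rw [hsum]
  have bern : ((s+1-d)/(s+1)) ≤ (s/(s+1))^d := by
    have := one_add_mul_le_pow (a := -(1/(s+1))) (by
      have : 1/(s+1) ≤ 1 := by rw [div_le_one hvpos]; linarith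
      linarith) d
    have e1 : 1 + (d:ℝ) * -(1/(s+1)) = (s+1-d)/(s+1) := by field_simp; ring
    have e2 : 1 + -(1/(s+1)) = s/(s+1) := by field_simp; ring
    rwa [e1, e2] at this
  have e3 : ((s+1)⁻¹)^d = (s⁻¹)^d * (s/(s+1))^d := by
    rw [← mul_pow]; congr 1; field_simp
  rw [e3, mul_assoc]
  apply mul_le_mul_of_nonneg_left _ (by positivity)
  have hB : 0 ≤ 2 * (d:ℝ) + d * (d + 1) * 4 * s / (s+1)^2 := by positivity
  refine le_trans ?_ (mul_le_mul_of_nonneg_right bern hB)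
  rw [div_mul_eq_mul_div, le_div_iff₀ hvpos]
  have : 2 * d * d ≤ (s + 1 - d) * (d * (d + 1) * 4 * s / (s+1)^2) := by
    rw [← mul_div_assoc, le_div_iff₀ (by positivity)]
    have q1 : 3/4 * s ≤ s + 1 - d := by linarith
    have q2 : (s+1)^2 ≤ 3/2 * s^2 := by nlinarith
    have q3 : 3/4 * s * (d * (d+1) * 4 * s) ≤ (s + 1 - d) * (d * (d + 1) * 4 * s) := mul_le_mul_of_nonneg_right q1 (by positivity)
    have q4 : 2 * d * d * (s+1)^2 ≤ 2 * d * d * (3/2 * s^2) := mul_le_mul_of_nonneg_left q2 (by positivity)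
    have q5 : 0 ≤ (d:ℝ) * s^2 := by positivity
    nlinarith
  nlinarith

/-- growth lemma -/
lemma grow (hd : 3 ≤ d) (u : V d → ℝ) (y : V d) (R σ : ℕ) (l : ℝ) (hl : 0 ≤ l) (hσ : 2 * d ≤ σ) (hR : 0 < R)
    (hh : ∀ w ∈ cube y R, u w = av u w) (h0 : ∀ w ∈ cube y R, 0 ≤ u w) 
    (h1 : ∀ w ∈ cube y σ, l ≤ u w) (x : V d) (hx : x ∈ cube y (R-1)) (hx2 : x ∉ cube y σ) :
    l * (σ^2)^d * (((nsq (x - y))⁻¹)^d - (((R:ℝ)^2)⁻¹)^d) ≤ u x := by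
  have hd0 : (3:ℝ) ≤ d := by exact_mod_cast hd
  have hsig : (2:ℝ) * d ≤ σ := by exact_mod_cast hσ
  have hR' : (0:ℝ) < R := by exact_mod_cast hR
  have key := maxp2 (by omega) {w | w ∈ cube y (R-1) ∧ w ∉ cube y σ} ((cube_finite y (R-1)).subset (fun w hw => hw.1))
    (fun w => (l * (σ^2)^d * (((nsq (w - y))⁻¹)^d - (((R:ℝ)^2)⁻¹)^d)) - u w) ?_ ?_ x ⟨hx, hx2⟩
  · linarith
  · rintro w ⟨hw1, hw2⟩
    have hwR : w ∈ cube y R := by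
      rw [mem_cube] at hw1 ⊢; intro i; have := hw1 i; omega
    rw [av_sub, av_smul, av_sub, av_const (by omega), av_shift (fun w => ((nsq w)⁻¹)^d), ← hh w hwR]
    have : ((nsq (w - y))⁻¹)^d ≤ av (fun w => ((nsq w)⁻¹)^d) (w - y) := by
      apply psi_sub hd
      rw [mem_cube] at hw2
      push Not at hw2
      obtain ⟨i, hi⟩ := hw2
      have h1 : ((σ:ℝ))^2 ≤ (((w - y) i : ℤ):ℝ)^2 := by
        have : ((σ:ℤ))^2 ≤ ((w - y) i)^2 := by
          rw [sq_le_sq, Nat.abs_cast]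
          simp only [Pi.sub_apply]
          by_cases h : w i ≤ y i + σ
          · have := hi h; rw [abs_of_neg] <;> omega
          · rw [abs_of_pos] <;> omega
        exact_mod_cast this
      have := sq_le_nsq (w - y) i
      nlinarith
    have := mul_le_mul_of_nonneg_left this (show 0 ≤ l * ((σ:ℝ)^2)^d by positivity)
    linarith
  · rintro w ⟨hw1, hw2⟩ v hv hvU
    have hvR : v ∈ cube y R := by
      rw [mem_cube] at hw1 ⊢; intro i; have := hw1 i; have := hv i; omega
    by_cases hvs : v ∈ cube y σ
    · have hge := h1 v hvs
      rw [mem_cube] at hw2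
      push Not at hw2
      obtain ⟨i, hi⟩ := hw2
      have h1 : ((σ:ℝ))^2 ≤ (((v - y) i : ℤ):ℝ)^2 := by
        have : ((σ:ℤ))^2 ≤ ((v - y) i)^2 := by
          rw [sq_le_sq, Nat.abs_cast]
          simp only [Pi.sub_apply]
          have := hv i
          by_cases h : w i ≤ y i + σ
          · have := hi h; rw [abs_of_neg] <;> omega
          · rw [abs_of_pos] <;> omega
        exact_mod_cast this
      have h2 := h1.trans (sq_le_nsq (v - y) i)
      have hσ2 : (0:ℝ) < (σ:ℝ)^2 := by nlinarith
      have h3 : ((nsq (v - y))⁻¹)^d ≤ (((σ:ℝ)^2)⁻¹)^d := by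
        apply pow_le_pow_left₀ (inv_nonneg.2 (nsq_nonneg _))
        exact inv_anti₀ hσ2 h2
      have h4 : 0 ≤ (((R:ℝ)^2)⁻¹)^d := by positivity
      have h5 : l * ((σ:ℝ)^2)^d * (((nsq (v - y))⁻¹)^d - (((R:ℝ)^2)⁻¹)^d) ≤ l * ((σ:ℝ)^2)^d * (((σ:ℝ)^2)⁻¹)^d := 
        mul_le_mul_of_nonneg_left (by linarith) (by positivity)
      have h6 : l * ((σ:ℝ)^2)^d * (((σ:ℝ)^2)⁻¹)^d = l := by
        rw [mul_assoc, ← mul_pow, mul_inv_cancel₀ hσ2.ne', one_pow, mul_one]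
      linarith
    · have hvR2 : v ∉ cube y (R-1) := fun h => hvU ⟨h, hvs⟩
      rw [mem_cube] at hvR2
      push Not at hvR2
      obtain ⟨i, hi⟩ := hvR2
      have h1 : ((R:ℝ))^2 ≤ (((v - y) i : ℤ):ℝ)^2 := by
        have : ((R:ℤ))^2 ≤ ((v - y) i)^2 := by
          rw [sq_le_sq, Nat.abs_cast]
          simp only [Pi.sub_apply]
          by_cases h : v i ≤ y i + (R - 1 : ℕ)
          · have := hi h; rw [abs_of_neg] <;> omega
          · rw [abs_of_pos] <;> omega
        exact_mod_cast this
      have h2 := h1.trans (sq_le_nsq (v - y) i)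
      have h3 : ((nsq (v - y))⁻¹)^d ≤ (((R:ℝ)^2)⁻¹)^d := by
        apply pow_le_pow_left₀ (inv_nonneg.2 (nsq_nonneg _))
        exact inv_anti₀ (by positivity) h2
      have h5 : l * ((σ:ℝ)^2)^d * (((nsq (v - y))⁻¹)^d - (((R:ℝ)^2)⁻¹)^d) ≤ 0 := 
        mul_nonpos_of_nonneg_of_nonpos (by positivity) (by linarith)
      linarith [h0 v hvR]

lemma cube_sub {x y : V d} {a b : ℕ} (t : ℕ) (h : y ∈ cube x t) (hab : t + a ≤ b) : cube y a ⊆ cube x b := by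
  intro w hw
  rw [mem_cube] at *
  intro i
  have := h i; have := hw i; omega

lemma local_lower (hd : 3 ≤ d) (u : V d → ℝ) (y : V d) (δ : ℕ) (hδ : 1 ≤ δ)
    (hh : ∀ w ∈ cube y (δ + 2 * d^2), u w = av u w)
    (h0 : ∀ w ∈ cube y (δ + 2 * d^2 + 1), 0 ≤ u w)
    (h1 : ∀ w ∈ cube y (δ / 2), u w ≤ 4^d * u y) 
    (w : V d) (hw : w ∈ cube y (2 * (δ / (16 * d^2 * 4^d)) + 2 * d)) :
    u y ≤ 2 * (2 * d)^(2 * d^2) * u w := by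
  have hd0 : (3:ℝ) ≤ d := by exact_mod_cast hd
  set q := 16 * d^2 * 4^d with hq
  set ρ := δ / q with hρ
  have hqρ : q * ρ ≤ δ := Nat.mul_div_le δ q
  have h4 : 1 ≤ 4^d := Nat.one_le_pow _ _ (by norm_num)
  have hq1 : 16 * d ≤ q := by rw [hq]; nlinarith
  have hu0 : 0 ≤ u y := h0 y (by rw [mem_cube]; intro i; omega)
  have hex : ∃ κ : V d, ∀ i, (κ i).natAbs ≤ ρ ∧ (w i - y i - 2 * κ i).natAbs ≤ 2 * d := by
    have : ∀ i, ∃ k : ℤ, k.natAbs ≤ ρ ∧ (w i - y i - 2 * k).natAbs ≤ 2 * d := by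
      intro i
      rw [mem_cube] at hw
      have := hw i
      by_cases c1 : w i - y i > 2 * ρ
      · exact ⟨ρ, by omega, by omega⟩
      by_cases c2 : w i - y i < -(2 * ρ)
      · exact ⟨-ρ, by omega, by omega⟩
      exact ⟨(w i - y i) / 2, by omega, by omega⟩
    choose k hk using this
    exact ⟨k, hk⟩
  obtain ⟨κ, hκ⟩ := hex
  have e2 : ∀ j, (2 • κ) j = 2 * κ j := by intro j; simp
  have hhalf : u y ≤ 2 * u (y + 2 • κ) := by
    by_cases hρ0 : ρ = 0
    · have : κ = 0 := by
        ext i; have := hκ i; simp only [Pi.zero_apply]; omega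
      rw [this]; simp; linarith
    have hp : l1 κ ≤ d * ρ := l1_le κ ρ fun i => (hκ i).1
    have hX : 16 * (d * ρ) ≤ δ := by
      calc 16 * (d * ρ) = (16 * d) * ρ := by ring
        _ ≤ q * ρ := Nat.mul_le_mul_right _ hq1
        _ ≤ δ := hqρ
    have hdρ : 3 ≤ d * ρ := by nlinarith [Nat.pos_of_ne_zero hρ0]
    have hle : δ / 2 - 1 ≤ δ + 2 * d^2 := by omega
    have hch := chain (by omega) u y (δ / 2 - 1) (δ / 4) (4^d * u y) 
      (fun w hw => hh w (cube_sub 0 (by rw [mem_cube]; intro i; omega) (by omega) hw))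
      (fun w hw => h0 w (cube_sub 0 (by rw [mem_cube]; intro i; omega) (by omega) hw))
      (fun w hw => h1 w (cube_sub 0 (by rw [mem_cube]; intro i; omega) (by omega) hw))
      (l1 κ) κ rfl (by omega)
    have hδpos : (0:ℝ) < δ := by exact_mod_cast hδ
    have hS : (δ:ℝ) ≤ 4 * (((δ / 4 : ℕ) : ℝ) + 1) := by
      exact_mod_cast (by omega : δ ≤ 4 * (δ / 4 + 1))
    set S : ℝ := ((δ / 4 : ℕ) : ℝ) + 1 with hSdef
    have hSpos : 0 < S := by positivity
    have hloss : (l1 κ : ℝ) * (4^d * u y * d / S) ≤ u y / 4 := by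
      have p1 : (l1 κ : ℝ) ≤ d * ρ := by exact_mod_cast hp
      have p2 : (16 * (d:ℝ)^2 * 4^d) * ρ ≤ δ := by
        have : ((q * ρ : ℕ) : ℝ) ≤ δ := by exact_mod_cast hqρ
        rw [hq] at this; push_cast at this; exact this
      rw [← mul_div_assoc, div_le_iff₀ hSpos]
      calc (l1 κ : ℝ) * (4^d * u y * d) ≤ d * ρ * (4^d * u y * d) := mul_le_mul_of_nonneg_right p1 (by positivity)
        _ = (16 * (d:ℝ)^2 * 4^d * ρ) * (u y / 16) := by ring
        _ ≤ δ * (u y / 16) := mul_le_mul_of_nonneg_right p2 (by positivity)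
        _ ≤ (4 * S) * (u y / 16) := mul_le_mul_of_nonneg_right hS (by positivity)
        _ = _ := by ring
    linarith
  have hy1 : y + 2 • κ ∈ cube y δ := by
    have : 2 * ρ ≤ δ := by nlinarith
    rw [mem_cube]; intro i
    have := (hκ i).1
    simp only [Pi.add_apply, e2]; omega
  have hl : l1 (w - y - 2 • κ) ≤ 2 * d^2 := by
    refine (l1_le _ (2 * d) fun i => ?_).trans (by nlinarith)
    simp only [Pi.sub_apply, e2]; exact (hκ i).2
  have hon := onestep (by omega) u (y + 2 • κ) (2 * d^2) 
    (fun w hw => hh w (cube_sub δ hy1 le_rfl hw)) (fun w hw => h0 w (cube_sub δ hy1 (by omega) hw))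
    (l1 (w - y - 2 • κ)) hl _ rfl
  have ew : y + 2 • κ + (w - y - 2 • κ) = w := by abel
  rw [ew] at hon
  have hw0 : 0 ≤ u w := by
    apply h0
    have : 2 * ρ ≤ δ := by nlinarith
    have : d ≤ d^2 := by nlinarith
    exact cube_sub 0 (by rw [mem_cube]; intro i; omega) (by omega) hw
  have hpow : ((2:ℝ) * d)^(l1 (w - y - 2 • κ)) ≤ (2 * d)^(2 * d^2) := 
    pow_le_pow_right₀ (by linarith) hl
  have := mul_le_mul_of_nonneg_right hpow hw0
  linarith

lemma harnack (hd : 3 ≤ d) : ∃ C : ℝ, ∃ A0 : ℕ, 1 ≤ C ∧ 1 ≤ A0 ∧ ∀ (u : V d → ℝ) (z : V d) (r : ℕ), 1 ≤ r →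
    (∀ w ∈ cube z (A0 * r), u w = av u w) → (∀ w ∈ cube z (A0 * r + 1), 0 ≤ u w) → 
    ∀ y ∈ cube z r, u y ≤ C * u z := by
  have hd0 : (3:ℝ) ≤ d := by exact_mod_cast hd
  set q : ℕ := 16 * d^2 * 4^d with hq
  set Bd : ℝ := 2 * (2 * d)^(2 * d^2) with hBd
  have hBd1 : 1 ≤ Bd := by
    have : (1:ℝ) ≤ (2 * d)^(2 * d^2) := one_le_pow₀ (by linarith)
    linarith
  have hq1 : (1:ℝ) ≤ q := by
    have : 1 ≤ q := by
      rw [hq]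
      have h4 : 1 ≤ 4^d := Nat.one_le_pow _ _ (by norm_num)
      nlinarith
    exact_mod_cast this
  set G : ℝ := (q:ℝ)^2 * (9 * d) with hG
  have hG1 : 1 ≤ G := by nlinarith
  have hG9 : 9 ≤ G := by nlinarith
  have hGd : 1 ≤ G^d := one_le_pow₀ hG1
  refine ⟨2 * Bd * G^d, 2 * d^2 + 4 * d + 5, by nlinarith, by omega, ?_⟩
  intro u z r hr hh h0 y hy
  have hrR : (1:ℝ) ≤ r := by exact_mod_cast hr
  set A0 := 2 * d^2 + 4 * d + 5 with hA0
  have hA1 : 2 * r + (2 * r + 1 + 2 * d^2) ≤ A0 * r := by rw [hA0]; nlinarith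
  have hA2 : 2 * r + 4 * d * r ≤ A0 * r := by rw [hA0]; nlinarith
  let dz : V d → ℕ := fun y => Finset.univ.sup fun i => (y i - z i).natAbs
  have hdz : ∀ y t, dz y ≤ t ↔ y ∈ cube z t := by
    intro y t
    simp only [dz, Finset.sup_le_iff, Finset.mem_univ, true_imp_iff, mem_cube]
    constructor
    · intro h i; have := h i; omega
    · intro h i; have := h i; omega
  have hzc : z ∈ cube z (2 * r) := by rw [mem_cube]; intro i; omega
  obtain ⟨ys, hys, hmax⟩ := Set.exists_max_image (cube z (2 * r)) 
    (fun y => u y * (((2 * r + 1 - dz y : ℕ) : ℝ)^2)^d) (cube_finite _ _) ⟨z, hzc⟩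
  beta_reduce at hmax
  set δ := 2 * r + 1 - dz ys with hδ
  have hdys : dz ys ≤ 2 * r := (hdz _ _).2 hys
  have hδ1 : 1 ≤ δ := by omega
  have hδpos : (0:ℝ) < δ := by exact_mod_cast hδ1
  have hδ3 : (δ:ℝ) ≤ 3 * r := by exact_mod_cast (by omega : δ ≤ 3 * r)
  have hnn : ∀ w ∈ cube z (2 * r), 0 ≤ u w := fun w hw => h0 w (cube_sub 0 (by rw [mem_cube]; intro i; omega) (by omega) hw)
  have husnn := hnn ys hys
  have hloc := local_lower hd u ys δ hδ1 (fun w hw => hh w (cube_sub (2*r) hys (by omega) hw))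
    (fun w hw => h0 w (cube_sub (2*r) hys (by omega) hw)) (by
      intro w hw
      have hw1 : w ∈ cube z (dz ys + δ / 2) := cube_sub (dz ys) ((hdz _ _).1 le_rfl) le_rfl hw
      have hw2 := (hdz _ _).2 hw1
      have hw3 : w ∈ cube z (2 * r) := (hdz _ _).1 (by omega)
      have hm := hmax w hw3
      have hge : (δ:ℝ) ≤ 2 * ((2 * r + 1 - dz w : ℕ) : ℝ) := by
        exact_mod_cast (by omega : δ ≤ 2 * (2 * r + 1 - dz w))
      set ε : ℝ := ((2 * r + 1 - dz w : ℕ) : ℝ) with hε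
      have hεpos : 0 < ε := by linarith
      have h5 : ((δ:ℝ)^2)^d ≤ 4^d * (ε^2)^d := by
        rw [← mul_pow]
        apply pow_le_pow_left₀ (by positivity)
        nlinarith
      have h6 : 0 < (ε^2)^d := by positivity
      have h7 : u w * (ε^2)^d ≤ (4^d * u ys) * (ε^2)^d := by
        calc _ ≤ _ := hm
          _ ≤ u ys * (4^d * (ε^2)^d) := mul_le_mul_of_nonneg_left h5 husnn
          _ = _ := by ring
      exact le_of_mul_le_mul_right h7 h6)
  rw [← hBd, ← hq] at hloc
  set σ := 2 * (δ / q) + 2 * d with hσ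
  have hzn : 0 ≤ u z := hnn z hzc
  have key : u ys * ((δ:ℝ)^2)^d ≤ 2 * Bd * G^d * ((r:ℝ)^2)^d * u z := by
    by_cases hz : z ∈ cube ys σ
    · have h1 := hloc z hz
      have h2 : ((δ:ℝ)^2)^d ≤ G^d * ((r:ℝ)^2)^d := by
        rw [← mul_pow]
        apply pow_le_pow_left₀ (by positivity)
        nlinarith
      calc u ys * ((δ:ℝ)^2)^d ≤ (Bd * u z) * (G^d * ((r:ℝ)^2)^d) := mul_le_mul h1 h2 (by positivity) (by positivity)
        _ ≤ 2 * ((Bd * u z) * (G^d * ((r:ℝ)^2)^d)) := by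
          have : 0 ≤ (Bd * u z) * (G^d * ((r:ℝ)^2)^d) := by positivity
          linarith
        _ = _ := by ring
    · have h1 := grow hd u ys (4 * d * r) σ (u ys / Bd) (by positivity) (by omega) (by positivity)
        (fun w hw => hh w (cube_sub (2*r) hys (by omega) hw)) (fun w hw => h0 w (cube_sub (2*r) hys (by omega) hw))
        (fun w hw => by rw [div_le_iff₀ (by positivity), mul_comm]; exact hloc w hw) z (by
          have : 12 * r ≤ 4 * d * r := by nlinarith
          rw [mem_cube] at hys ⊢; intro i; have := hys i; omega) hz
      have hdr : (0:ℝ) < 4 * d * r^2 := by positivity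
      have hns : nsq (z - ys) ≤ 4 * d * r^2 := by
        have := nsq_le (z - ys) (2 * r) (fun i => by
          rw [mem_cube] at hys
          have := hys i
          have h : |(z - ys) i| ≤ 2 * r := by
            rw [abs_le]; simp only [Pi.sub_apply]; omega
          exact_mod_cast h)
        linarith
      have hnpos : 0 < nsq (z - ys) := by
        rw [mem_cube] at hz
        push Not at hz
        obtain ⟨i, hi⟩ := hz
        have h1 := sq_le_nsq (z - ys) i
        have h2 : (z - ys) i ≠ 0 := by
          simp only [Pi.sub_apply]; intro h
          have := hi (by omega); omega
        have h3 : (0:ℝ) < (((z - ys) i : ℤ):ℝ)^2 := by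
          have : (((z - ys) i : ℤ):ℝ) ≠ 0 := by exact_mod_cast h2
          positivity
        linarith
      set a : ℝ := (4 * d * r^2)⁻¹ with ha
      have hapos : 0 < a := inv_pos.2 hdr
      have e1 : a^d ≤ ((nsq (z - ys))⁻¹)^d := pow_le_pow_left₀ hapos.le (inv_anti₀ hnpos hns) d
      have e2 : ((((4 * d * r : ℕ) : ℝ)^2)⁻¹)^d ≤ a^d / 2 := by
        have : (((4 * d * r : ℕ) : ℝ)^2)⁻¹ = a * (4 * (d:ℝ))⁻¹ := by
          rw [ha]; push_cast; field_simp; try ring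
        rw [this, mul_pow, div_eq_mul_inv]
        apply mul_le_mul_of_nonneg_left _ (by positivity)
        rw [inv_pow]
        apply inv_anti₀ (by norm_num)
        calc (2:ℝ) ≤ 4 * d := by linarith
          _ ≤ (4 * d)^d := le_self_pow₀ (by linarith) (by omega)
      have h2 : u ys / Bd * ((σ:ℝ)^2)^d * (a^d / 2) ≤ u z := 
        le_trans (mul_le_mul_of_nonneg_left (by linarith) (by positivity)) h1
      have hσδ : (δ:ℝ) ≤ q * σ := by
        have : δ ≤ q * σ := by
          have h3 := Nat.div_add_mod δ q
          have hqpos : 0 < q := by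
            have : (0:ℝ) < q := by linarith
            exact_mod_cast this
          have h4 := Nat.mod_lt δ hqpos
          have h5 : δ / q + 1 ≤ σ := by omega
          calc δ ≤ q * (δ / q + 1) := by rw [mul_add]; omega
            _ ≤ _ := Nat.mul_le_mul_left _ h5
        exact_mod_cast this
      have h6 : ((δ:ℝ)^2)^d ≤ ((q:ℝ)^2)^d * ((σ:ℝ)^2)^d := by
        rw [← mul_pow]
        apply pow_le_pow_left₀ (by positivity)
        rw [← mul_pow]
        exact pow_le_pow_left₀ hδpos.le hσδ 2
      have h7 : a^d * (4 * d * r^2)^d = 1 := by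
        rw [← mul_pow, ha, inv_mul_cancel₀ hdr.ne', one_pow]
      have h8 : u ys * ((σ:ℝ)^2)^d ≤ 2 * Bd * (4 * d * r^2)^d * u z := by
        have e : u ys * ((σ:ℝ)^2)^d = 2 * Bd * (4 * d * r^2)^d * (u ys / Bd * ((σ:ℝ)^2)^d * (a^d / 2)) := by
          have : 2 * Bd * (4 * d * r^2)^d * (u ys / Bd * ((σ:ℝ)^2)^d * (a^d / 2)) = 
            (a^d * (4 * d * r^2)^d) * (u ys * ((σ:ℝ)^2)^d) * (Bd / Bd) := by ring
          rw [this, h7, div_self (by positivity)]; ring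
        rw [e]
        exact mul_le_mul_of_nonneg_left h2 (by positivity)
      calc u ys * ((δ:ℝ)^2)^d ≤ u ys * (((q:ℝ)^2)^d * ((σ:ℝ)^2)^d) := mul_le_mul_of_nonneg_left h6 husnn
        _ = ((q:ℝ)^2)^d * (u ys * ((σ:ℝ)^2)^d) := by ring
        _ ≤ ((q:ℝ)^2)^d * (2 * Bd * (4 * d * r^2)^d * u z) := mul_le_mul_of_nonneg_left h8 (by positivity)
        _ = 2 * Bd * ((q:ℝ)^2 * (4 * d * r^2))^d * u z := by rw [mul_pow ((q:ℝ)^2)]; ring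
        _ ≤ 2 * Bd * (G * r^2)^d * u z := by
          apply mul_le_mul_of_nonneg_right _ hzn
          apply mul_le_mul_of_nonneg_left _ (by positivity)
          apply pow_le_pow_left₀ (by positivity)
          rw [hG]
          have : 0 ≤ (q:ℝ)^2 * (d * r^2) := by positivity
          nlinarith
        _ = _ := by rw [mul_pow]; ring
  have hy2 : y ∈ cube z (2 * r) := cube_sub 0 (by rw [mem_cube]; intro i; omega) (by omega) hy
  have hm := hmax y hy2
  have hdy := (hdz _ _).2 hy
  have hge : (r:ℝ) ≤ ((2 * r + 1 - dz y : ℕ) : ℝ) := by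
    exact_mod_cast (by omega : r ≤ 2 * r + 1 - dz y)
  have h9 : ((r:ℝ)^2)^d ≤ (((2 * r + 1 - dz y : ℕ) : ℝ)^2)^d := by
    apply pow_le_pow_left₀ (by positivity)
    exact pow_le_pow_left₀ (by positivity) hge 2
  have h10 : u y * ((r:ℝ)^2)^d ≤ (2 * Bd * G^d * u z) * ((r:ℝ)^2)^d := by
    calc _ ≤ _ := mul_le_mul_of_nonneg_left h9 (hnn y hy2)
      _ ≤ _ := hm
      _ ≤ _ := key
      _ = _ := by ring
  exact le_of_mul_le_mul_right h10 (by positivity)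

/-- point at height t above x -/
def pt (i0 : Fin d) (x : V d) (t : ℕ) : V d := fun i => x i + if i = i0 then (t : ℤ) else 0

lemma pt_self (i0 : Fin d) (x : V d) (t : ℕ) : pt i0 x t i0 = x i0 + t := by simp [pt]

lemma pt_ne (i0 : Fin d) (x : V d) (t : ℕ) (i : Fin d) (h : i ≠ i0) : pt i0 x t i = x i := by simp [pt, h]

lemma pt_succ (i0 : Fin d) (x : V d) (t : ℕ) : pt i0 x (t + 1) = pt i0 x t + ev i0 := by
  ext i; simp only [pt, Pi.add_apply, ev_apply]; split_ifs <;> push_cast <;> ring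

lemma mono_up (hd : 0 < d) (K : Set (V d)) (i0 : Fin d) (n : ℤ) (hK : ∀ x ∈ K, x i0 ≤ n) (y y' : V d)
    (hs : ∀ i, i ≠ i0 → y' i = y i) (hle : y i0 ≤ y' i0) (hsum : 2 * n ≤ y i0 + y' i0)
    (hev : (2:ℤ) ∣ y i0 + y' i0) : al Set.univ K y ≤ al Set.univ K y' := by
  obtain ⟨c, hc⟩ := hev
  have := al_refl K hd i0 n c (by omega) hK y (by omega)
  have e : refl0 i0 c y = y' := by
    ext i; rw [refl0_apply]; split_ifs with h
    · subst h; omega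
    · exact (hs i h).symm
  rwa [e] at this

lemma geom (a : ℕ → ℝ) (C : ℝ) (hC : 0 ≤ C) (h : ∀ j, a (j+1) ≤ C * a j) (J : ℕ) : a J ≤ C^J * a 0 := by
  induction J with
  | zero => simp
  | succ J ih =>
    calc _ ≤ _ := h J
      _ ≤ C * (C^J * a 0) := mul_le_mul_of_nonneg_left ih hC
      _ = _ := by ring

lemma step_up (hd : 0 < d) (A : Set (V d)) (i0 : Fin d) (x : V d) (t : ℕ) (h : pt i0 x t ∉ A) :
    al Set.univ A (pt i0 x (t+1)) ≤ 2 * d * al Set.univ A (pt i0 x t) := by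
  have := (av_ge_add hd (f := al Set.univ A) (x := pt i0 x t) (fun i => al_nonneg _ _ _) (fun i => al_nonneg _ _ _) i0).1
  rwa [← al_harm hd _ _ _ h (Set.mem_univ _), ← pt_succ] at this

lemma core (hd : 3 ≤ d) (i0 : Fin d) : ∃ c : ℝ, 0 < c ∧ ∀ (K : Set (V d)) (n : ℤ) (x : V d) (m : ℕ), 
    (∀ y ∈ K, y i0 ≤ n) → x i0 = n → 8 ≤ m → 
    c * al Set.univ K (pt i0 x m) ≤ al Set.univ (K ∪ cube x (m / 2)) (pt i0 x m) := by
  have hd0 : (3:ℝ) ≤ d := by exact_mod_cast hd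
  have hdpos : 0 < d := by omega
  obtain ⟨C, A0, hC, hA0, hH⟩ := harnack hd
  obtain ⟨A', hA'⟩ := exists_nat_ge ((d + 25) * (2 * C)^3)
  have hA'1 : (1:ℝ) ≤ A' := by
    have : (1:ℝ) ≤ (2 * C)^3 := one_le_pow₀ (by linarith)
    nlinarith
  set A2 := A' + (2 * A0 + 1) with hA2
  set J := 8 * A0 * A2 with hJ
  set C' : ℝ := C * (2 * d) with hC'
  have hC'pos : 0 < C' := by positivity
  refine ⟨(2 * C'^J)⁻¹, by positivity, ?_⟩
  intro K n x m hK hx hm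
  set h := al Set.univ K with hh
  set g := al Set.univ (K ∪ cube x (m / 2)) with hg
  set r' := max (m / (4 * A0)) 1 with hr'
  set H := m + J * r' with hHdef
  have hr8 : m ≤ 8 * A0 * r' := by
    by_cases hc : 4 * A0 ≤ m
    · have h1 : 1 ≤ m / (4 * A0) := (Nat.one_le_div_iff (by omega)).2 hc
      have h2 := Nat.div_add_mod m (4 * A0)
      have h3 := Nat.mod_lt m (show 4 * A0 > 0 by omega)
      have h4 : m / (4 * A0) ≤ r' := le_max_left _ _
      calc m ≤ 4 * A0 * (m / (4 * A0)) + 4 * A0 * 1 := by omega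
        _ ≤ 4 * A0 * r' + 4 * A0 * r' := by
          apply Nat.add_le_add (Nat.mul_le_mul_left _ h4) (Nat.mul_le_mul_left _ (h1.trans h4))
        _ = _ := by ring
    · have h1 : 1 ≤ r' := le_max_right _ _
      nlinarith
  have hHA : A2 * m ≤ H := by
    calc A2 * m ≤ A2 * (8 * A0 * r') := Nat.mul_le_mul_left _ hr8
      _ = J * r' := by rw [hJ]; ring
      _ ≤ H := by omega
  set z := pt i0 x ((2 * A0 + 1) * m) with hz
  -- sup over the box
  have hsup : ∀ y ∈ cube x (m / 2), h y ≤ C * h z := by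
    intro y hy
    rw [mem_cube] at hy
    have hhar : ∀ y ∈ cube z m, h y ≤ C * h z := by
      apply hH h z m (by omega)
      · intro w hw
        apply al_harm hdpos _ _ _ _ (Set.mem_univ _)
        intro hwK
        have h1 := hK w hwK
        rw [mem_cube] at hw
        have h2 := hw i0
        rw [hz, pt_self, hx] at h2
        push_cast at h2
        have h3 : (0:ℤ) ≤ A0 * m := by positivity
        have h4 : (2 * (A0:ℤ) + 1) * m = A0 * m + A0 * m + m := by ring
        rw [h4] at h2
        omega
      · intro w _; exact al_nonneg _ _ _
    have hy0 := hy i0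
    set E := (2 * A0 + 1) * m with hE
    have hEm : m ≤ E := by rw [hE]; nlinarith
    by_cases hpar : (2:ℤ) ∣ y i0 + (x i0 + E)
    · refine (mono_up hdpos K i0 n hK y (fun i => if i = i0 then x i0 + E else y i) ?_ ?_ ?_ ?_).trans (hhar _ ?_)
      · intro i hi; simp [hi]
      · simp; omega
      · simp; omega
      · simpa using hpar
      · rw [mem_cube]; intro i
        by_cases hi : i = i0
        · subst hi; rw [hz, pt_self]; simp
        · rw [hz, pt_ne _ _ _ _ hi]; simp [hi]; have := hy i; omega
    · refine (mono_up hdpos K i0 n hK y (fun i => if i = i0 then x i0 + E + 1 else y i) ?_ ?_ ?_ ?_).trans (hhar _ ?_)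
      · intro i hi; simp [hi]
      · simp; omega
      · simp; omega
      · simp; omega
      · rw [mem_cube]; intro i
        by_cases hi : i = i0
        · subst hi; rw [hz, pt_self]; simp; omega
        · rw [hz, pt_ne _ _ _ _ hi]; simp [hi]; have := hy i; omega
  have hJr : J * r' = 2 * (4 * A0 * A2 * r') := by rw [hJ]; ring
  have hzH : h z ≤ h (pt i0 x H) := by
    apply mono_up hdpos K i0 n hK
    · intro i hi; rw [hz, pt_ne _ _ _ _ hi, pt_ne _ _ _ _ hi]
    · rw [hz, pt_self, pt_self]
      have : (2 * A0 + 1) * m ≤ H := le_trans (Nat.mul_le_mul_right _ (by omega)) hHA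
      omega
    · rw [hz, pt_self, pt_self]; omega
    · rw [hz, pt_self, pt_self]
      have h1 : (2 * A0 + 1) * m = 2 * (A0 * m) + m := by ring
      rw [h1, hHdef, hJr]; push_cast; omega
  have hmH : h (pt i0 x m) ≤ h (pt i0 x H) := by
    apply mono_up hdpos K i0 n hK
    · intro i hi; rw [pt_ne _ _ _ _ hi, pt_ne _ _ _ _ hi]
    · rw [pt_self, pt_self]; omega
    · rw [pt_self, pt_self]; omega
    · rw [pt_self, pt_self]
      rw [hHdef, hJr]; push_cast; omega
  have hznn : 0 ≤ h z := al_nonneg _ _ _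
  have hHnn : 0 ≤ h (pt i0 x H) := al_nonneg _ _ _
  have hmR : (8:ℝ) ≤ m := by exact_mod_cast hm
  set φB := phi (d * (m:ℝ)^2) with hφB
  have hφpos : 0 < φB := phi_pos (by positivity)
  -- lower bound for g far away
  have hgH : h (pt i0 x H) / 2 ≤ g (pt i0 x H) := by
    have hlow := lower_al (K ∪ cube x (m / 2)) (fun y => h y - (C * h z / φB) * phi (nsq (y - x))) ?_ ?_ ?_ (pt i0 x H)
    · rw [← hg] at hlow
      have hHR : (A':ℝ) * m ≤ H := by
        have : A' * m ≤ H := le_trans (Nat.mul_le_mul_right _ (by omega)) hHA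
        exact_mod_cast this
      have hn : (H:ℝ)^2 ≤ nsq (pt i0 x H - x) := by
        have := sq_le_nsq (pt i0 x H - x) i0
        simpa [pt_self] using this
      have hφ1 : phi (nsq (pt i0 x H - x)) ≤ phi ((H:ℝ)^2) := phi_anti (by positivity) hn
      have hφ2 : 2 * C * phi ((H:ℝ)^2) ≤ φB := by
        have p1 := phi_cube (s := (H:ℝ)^2) (by positivity)
        have p2 := phi_cube (s := d * (m:ℝ)^2) (by positivity)
        rw [← hφB] at p2
        have hp3 := phi_pos (s := (H:ℝ)^2) (by positivity)
        apply cube_cmp (by positivity) hφpos.le (y := (d * (m:ℝ)^2 + 1600) * ((H:ℝ)^2 + 1600)) (by positivity)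
        have e1 : (2 * C * phi ((H:ℝ)^2))^3 * ((d * (m:ℝ)^2 + 1600) * ((H:ℝ)^2 + 1600)) = 
          (2 * C)^3 * (d * (m:ℝ)^2 + 1600) * (phi ((H:ℝ)^2)^3 * ((H:ℝ)^2 + 1600)) := by ring
        have e2 : φB^3 * ((d * (m:ℝ)^2 + 1600) * ((H:ℝ)^2 + 1600)) = (φB^3 * (d * (m:ℝ)^2 + 1600)) * ((H:ℝ)^2 + 1600) := by ring
        rw [e1, e2, p1, p2, mul_one, one_mul]
        have q1 : (d * (m:ℝ)^2 + 1600) ≤ (d + 25) * m^2 := by nlinarith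
        have q2 : ((d:ℝ) + 25) * (2 * C)^3 ≤ A'^2 := by nlinarith
        have q3 : ((A':ℝ) * m)^2 ≤ (H:ℝ)^2 := pow_le_pow_left₀ (by positivity) hHR 2
        calc (2 * C)^3 * (d * (m:ℝ)^2 + 1600) ≤ (2 * C)^3 * ((d + 25) * m^2) := mul_le_mul_of_nonneg_left q1 (by positivity)
          _ = ((d + 25) * (2 * C)^3) * m^2 := by ring
          _ ≤ A'^2 * m^2 := mul_le_mul_of_nonneg_right q2 (by positivity)
          _ ≤ _ := by rw [← mul_pow]; linarith
      have : C * h z / φB * phi (nsq (pt i0 x H - x)) ≤ h (pt i0 x H) / 2 := by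
        rw [div_mul_eq_mul_div, div_le_iff₀ hφpos]
        have hpp := phi_pos (nsq_nonneg (pt i0 x H - x))
        calc C * h z * phi (nsq (pt i0 x H - x)) ≤ C * h (pt i0 x H) * phi ((H:ℝ)^2) := by gcongr
          _ = (h (pt i0 x H) / 2) * (2 * C * phi ((H:ℝ)^2)) := by ring
          _ ≤ _ := mul_le_mul_of_nonneg_left hφ2 (by positivity)
      linarith
    · intro y
      have h1 := al_le_one hdpos Set.univ K y
      have h2 := phi_pos (nsq_nonneg (y - x))
      have h3 : 0 ≤ (C * h z / φB) * phi (nsq (y - x)) := by positivity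
      linarith
    · intro y hy
      have h2 := phi_pos (nsq_nonneg (y - x))
      rcases hy with hy | hy
      · have h1 : h y = 0 := al_mem _ _ _ hy
        have h3 : 0 ≤ (C * h z / φB) * phi (nsq (y - x)) := by positivity
        linarith
      · have h1 := hsup y hy
        have hn : nsq (y - x) ≤ d * (m:ℝ)^2 := by
          apply nsq_le
          intro i
          rw [mem_cube] at hy
          have := hy i
          have : |(y - x) i| ≤ m := by rw [abs_le]; simp only [Pi.sub_apply]; omega
          exact_mod_cast this
        have h4 := phi_anti (nsq_nonneg _) hn
        have : C * h z ≤ (C * h z / φB) * phi (nsq (y - x)) := by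
          calc C * h z = (C * h z / φB) * φB := by field_simp
            _ ≤ _ := mul_le_mul_of_nonneg_left h4 (by positivity)
        linarith
    · intro y _
      rw [av_sub, av_smul, av_shift (fun y => phi (nsq y))]
      have h1 := al_subharm hdpos K y
      have h2 := mul_le_mul_of_nonneg_left (phi_super hd (y - x)) (show 0 ≤ C * h z / φB by positivity)
      linarith
  -- descend
  have hdesc : g (pt i0 x (m + J * r')) ≤ C'^J * g (pt i0 x (m + 0 * r')) := by
    apply geom (fun j => g (pt i0 x (m + j * r'))) C' hC'pos.le
    intro j
    have hgn : 0 ≤ g (pt i0 x (m + j * r')) := al_nonneg _ _ _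
    have hout : ∀ w : V d, x i0 + m / 2 < w i0 → w ∉ K ∪ cube x (m / 2) := by
      intro w hw hwU
      rcases hwU with h1 | h1
      · have := hK w h1; omega
      · rw [mem_cube] at h1; have := h1 i0; omega
    have e : m + (j+1) * r' = m + j * r' + r' := by ring
    have hjr : 0 ≤ j * r' := Nat.zero_le _
    by_cases hc : 4 * A0 ≤ m
    · have h1 : 1 ≤ m / (4 * A0) := (Nat.one_le_div_iff (by omega)).2 hc
      have er : r' = m / (4 * A0) := max_eq_left h1
      have hb : 4 * (A0 * r') ≤ m := by
        rw [er, ← mul_assoc]; exact Nat.mul_div_le m (4 * A0)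
      have := hH g (pt i0 x (m + j * r')) r' (by omega) ?_ (fun w _ => al_nonneg _ _ _) (pt i0 x (m + (j+1) * r')) ?_
      · refine this.trans (mul_le_mul_of_nonneg_right ?_ hgn)
        rw [hC']; nlinarith
      · intro w hw
        apply al_harm hdpos _ _ _ _ (Set.mem_univ _)
        apply hout
        rw [mem_cube] at hw
        have := hw i0
        rw [pt_self] at this
        omega
      · rw [mem_cube]; intro i
        by_cases hi : i = i0
        · subst hi; rw [pt_self, pt_self, e]; omega
        · rw [pt_ne _ _ _ _ hi, pt_ne _ _ _ _ hi]; omega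
    · have er : r' = 1 := by
        rw [hr', Nat.div_eq_of_lt (by omega)]; rfl
      have := step_up hdpos (K ∪ cube x (m / 2)) i0 x (m + j * r') (by
        apply hout; rw [pt_self]; omega)
      rw [e]
      nth_rewrite 2 [er]
      refine this.trans (mul_le_mul_of_nonneg_right ?_ hgn)
      rw [hC']; nlinarith
  rw [zero_mul, add_zero] at hdesc
  rw [← hHdef] at hdesc
  have hCJ : 0 < 2 * C'^J := by positivity
  rw [inv_mul_le_iff₀ hCJ]
  linarith

lemma nsq_shift (w : V d) (i : Fin d) (t : ℤ) : nsq (w - (-t) • ev i) = nsq w + 2 * t * w i + t^2 := by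
  unfold nsq
  have : ∀ j, (((w - (-t) • ev i) j : ℤ) : ℝ) ^ 2 = (w j : ℝ) ^ 2 + if i = j then 2 * t * (w i : ℝ) + t^2 else 0 := by
    intro j
    split_ifs with h
    · subst h; simp [ev]; ring
    · simp [ev, Ne.symm h]
  simp only [this, Finset.sum_add_distrib, Finset.sum_ite_eq, Finset.mem_univ, if_true]
  ring

lemma outside (hd : 3 ≤ d) : ∃ c : ℝ, 0 < c ∧ ∀ (N : ℕ) (K : Set (V d)), 1 ≤ N → K ⊆ cube 0 N → 
    ∀ y : V d, (∃ i, 2 * N < |y i|) → c ≤ al Set.univ K y := by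
  have hd0 : (3:ℝ) ≤ d := by exact_mod_cast hd
  have hdpos : 0 < d := by omega
  set a : ℝ := (d:ℝ)^2 + 3 * d with ha
  set b : ℝ := ((d:ℝ) + 2)^2 with hb
  have hab : a < b := by rw [ha, hb]; nlinarith
  have hapos : 0 < a := by positivity
  set θ : ℝ := (a + 1600) / (b + 1600) with hθ
  have hθ1 : θ < 1 := by rw [hθ, div_lt_one (by linarith)]; linarith
  have hθ0 : 0 < θ := by positivity
  refine ⟨(1 - θ)/3, by linarith, ?_⟩
  intro N K hN hK y ⟨i, hi⟩
  have hNR : (1:ℝ) ≤ N := by exact_mod_cast hN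
  have hN2 : (1:ℝ) ≤ (N:ℝ)^2 := one_le_pow₀ hNR
  have : ∃ s : ℤ, (s = 1 ∨ s = -1) ∧ 2 * N < s * y i := by
    rcases lt_abs.1 hi with h | h
    · exact ⟨1, Or.inl rfl, by omega⟩
    · exact ⟨-1, Or.inr rfl, by omega⟩
  obtain ⟨s, hs, hsy⟩ := this
  set t : ℤ := s * (d * N) with ht
  have hs2 : s^2 = 1 := by rcases hs with h | h <;> rw [h] <;> norm_num
  have ht2 : (t:ℝ)^2 = (d:ℝ)^2 * N^2 := by
    have : t^2 = (d:ℤ)^2 * N^2 := by rw [ht, mul_pow, hs2]; ring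
    exact_mod_cast this
  set φK := phi (a * (N:ℝ)^2) with hφK
  have hφpos : 0 < φK := phi_pos (by positivity)
  have hlow := lower_al K (fun w => 1 - φK⁻¹ * phi (nsq (w - (-t) • ev i))) ?_ ?_ ?_ y
  · refine le_trans ?_ hlow
    beta_reduce
    have hn : b * (N:ℝ)^2 ≤ nsq (y - (-t) • ev i) := by
      have h1 := sq_le_nsq (y - (-t) • ev i) i
      refine le_trans ?_ h1
      have e : (y - (-t) • ev i) i = y i + t := by simp [ev]
      rw [e]
      have h2 : (((d:ℤ) + 2) * N)^2 ≤ (y i + t)^2 := by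
        have h3 : (y i + t)^2 = (s * y i + d * N)^2 := by
          have : s * (y i + t) = s * y i + d * N := by rw [ht]; linear_combination (d * N) * hs2
          rw [← this, mul_pow, hs2, one_mul]
        rw [h3]
        apply pow_le_pow_left₀ (by positivity)
        linarith
      rw [hb]
      have h4 : (((d:ℝ) + 2) * N)^2 ≤ ((y i + t : ℤ) : ℝ)^2 := by exact_mod_cast h2
      rw [mul_pow] at h4
      exact h4
    have h1 := phi_anti (by positivity) hn
    have h2 : phi (b * (N:ℝ)^2) ≤ (1 - (1-θ)/3) * φK := by
      have p1 := phi_cube (s := b * (N:ℝ)^2) (by positivity)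
      have p2 := phi_cube (s := a * (N:ℝ)^2) (by positivity)
      rw [← hφK] at p2
      apply cube_cmp (phi_pos (by positivity)).le (mul_nonneg (by linarith) hφpos.le) 
        (y := (b * (N:ℝ)^2 + 1600) * (a * (N:ℝ)^2 + 1600)) (by positivity)
      have e1 : phi (b * (N:ℝ)^2)^3 * ((b * (N:ℝ)^2 + 1600) * (a * (N:ℝ)^2 + 1600)) = 
        (phi (b * (N:ℝ)^2)^3 * (b * (N:ℝ)^2 + 1600)) * (a * (N:ℝ)^2 + 1600) := by ring
      have e2 : ((1 - (1-θ)/3) * φK)^3 * ((b * (N:ℝ)^2 + 1600) * (a * (N:ℝ)^2 + 1600)) = 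
        (1 - (1-θ)/3)^3 * (b * (N:ℝ)^2 + 1600) * (φK^3 * (a * (N:ℝ)^2 + 1600)) := by ring
      rw [e1, e2, p1, p2, one_mul, mul_one]
      have q1 : θ ≤ (1 - (1-θ)/3)^3 := by
        have : 0 ≤ 1 - θ := by linarith
        nlinarith [mul_nonneg this this, mul_nonneg (mul_nonneg this this) hθ0.le]
      have q2 : a * (N:ℝ)^2 + 1600 ≤ θ * (b * (N:ℝ)^2 + 1600) := by
        rw [hθ, div_mul_eq_mul_div, le_div_iff₀ (by linarith)]
        nlinarith [mul_nonneg (show 0 ≤ b - a by linarith) (show 0 ≤ (N:ℝ)^2 - 1 by linarith)]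
      exact q2.trans (mul_le_mul_of_nonneg_right q1 (by positivity))
    have h3 : φK⁻¹ * phi (nsq (y - (-t) • ev i)) ≤ 1 - (1-θ)/3 := by
      rw [inv_mul_le_iff₀ hφpos]; linarith
    linarith
  · intro w
    have h2 := phi_pos (nsq_nonneg (w - (-t) • ev i))
    have h3 : 0 ≤ φK⁻¹ * phi (nsq (w - (-t) • ev i)) := by positivity
    linarith
  · intro w hw
    have hwc := hK hw
    have hc : ∀ j, |(w j : ℝ)| ≤ N := by
      intro j
      have h1 := hwc j
      simp only [Pi.zero_apply, sub_zero] at h1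
      exact_mod_cast h1
    have h1 := nsq_le w N hc
    have h2 : nsq (w - (-t) • ev i) ≤ a * (N:ℝ)^2 := by
      rw [nsq_shift, ht2]
      have h3 : (t:ℝ) * w i ≤ (d:ℝ) * N * N := by
        calc (t:ℝ) * w i ≤ |(t:ℝ) * w i| := le_abs_self _
          _ = |(t:ℝ)| * |(w i : ℝ)| := abs_mul _ _
          _ ≤ (d * N) * N := by
            apply mul_le_mul _ (hc i) (abs_nonneg _) (by positivity)
            refine abs_le_of_sq_le_sq ?_ (by positivity)
            rw [ht2]; apply le_of_eq; ring
          _ = _ := by ring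
      rw [ha]; nlinarith
    have h4 := phi_anti (nsq_nonneg _) h2
    have : 1 ≤ φK⁻¹ * phi (nsq (w - (-t) • ev i)) := by
      rw [le_inv_mul_iff₀ hφpos]; linarith
    linarith
  · intro w _
    rw [av_sub, av_smul, av_const hdpos, av_shift (fun y => phi (nsq y))]
    have h2 := mul_le_mul_of_nonneg_left (phi_super hd (w - (-t) • ev i)) (inv_pos.2 hφpos).le
    linarith

lemma final_aux (hd : 3 ≤ d) : ∃ c : ℝ, 0 < c ∧
      ∀ (N n m : ℕ) (D K : Set (V d)) (x₀ : V d),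
        1 ≤ N → cube 0 (4 * N) ⊆ D → 8 ≤ m → m ≤ N / 2 → n ≤ N →
        K ⊆ cube 0 n → x₀ ∈ K →
        (∀ i : Fin d, (i : ℕ) = 0 → x₀ i = (n : ℤ)) →
        ∀ ν : Measure (ℕ → V d), IsSRWLaw ν (x₀ + (m : ℤ) • unitVec 0) →
          c ≤ (ProbabilityTheory.cond ν
                { ω | avoidBeforeExit D K ω }
                { ω | avoidBeforeExit D (cube x₀ (m / 2)) ω }).toReal := by
  have hdpos : 0 < d := by omega
  set i0 : Fin d := ⟨0, hdpos⟩ with hi0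
  obtain ⟨c2, hc2, hcore⟩ := core hd i0
  obtain ⟨c1, hc1, hout⟩ := outside hd
  refine ⟨c1 * c2, by positivity, ?_⟩
  intro N n m D K x₀ hN hD hm hmN hn hK hx hxn ν hν
  have hprob := hν.1
  have hx0 : x₀ i0 = n := hxn i0 rfl
  have hz : x₀ + (m : ℤ) • unitVec 0 = pt i0 x₀ m := by
    ext i
    simp only [Pi.add_apply, Pi.smul_apply, unitVec, pt, smul_eq_mul, hi0, Fin.ext_iff]
    split_ifs <;> simp
  rw [hz] at hν
  have hKc : ∀ w ∈ K, ∀ i, w i ≤ n ∧ -n ≤ w i := by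
    intro w hw i
    have := mem_cube.1 (hK hw) i
    simp only [Pi.zero_apply] at this
    omega
  have hKN : K ⊆ cube 0 N := by
    intro w hw; rw [mem_cube]; intro i; have := hKc w hw i; simp only [Pi.zero_apply]; omega
  have hKh : ∀ y ∈ K, y i0 ≤ n := fun y hy => (hKc y hy i0).1
  have hx0c := hKc x₀ hx
  set W := cube x₀ (3 * N) with hW
  have hWD : W ⊆ D := by
    refine subset_trans ?_ hD
    intro w hw
    rw [mem_cube] at *
    intro i; have := hw i; have := hx0c i; simp only [Pi.zero_apply]; omega
  have hfar : ∀ y : V d, y ∉ W → c1 ≤ al Set.univ K y := by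
    intro y hy
    apply hout N K hN hKN y
    rw [hW, mem_cube] at hy
    push Not at hy
    obtain ⟨i, hi⟩ := hy
    refine ⟨i, ?_⟩
    have := hx0c i
    rw [lt_abs]
    by_cases h : y i ≤ x₀ i + (3 * N : ℕ)
    · have := hi h; right; omega
    · left; omega
  have hq : c1 * al W K (pt i0 x₀ m) ≤ al Set.univ K (pt i0 x₀ m) := by
    have key := maxp2 hdpos (W \ K) ((cube_finite x₀ (3*N)).subset (fun w hw => hw.1))
      (fun w => c1 * al W K w - al Set.univ K w) ?_ ?_ (pt i0 x₀ m) ?_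
    · linarith
    · rintro w ⟨hw1, hw2⟩
      rw [av_sub, av_smul, ← al_harm hdpos W K w hw2 hw1, ← al_harm hdpos Set.univ K w hw2 (Set.mem_univ _)]
    · rintro w - y - hyU
      by_cases hyK : y ∈ K
      · rw [al_mem _ _ _ hyK, al_mem _ _ _ hyK]; simp
      · have hyW : y ∉ W := fun h => hyU ⟨h, hyK⟩
        have h1 := hfar y hyW
        have h2 := al_le_one hdpos W K y
        nlinarith
    · constructor
      · rw [hW, mem_cube]; intro i; simp only [pt]; split_ifs <;> (push_cast; omega)
      · intro h; have := hKh _ h; rw [pt_self] at this; omega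
  have hpos : 0 < al Set.univ K (pt i0 x₀ m) := by
    have h1 := geom (fun j => al Set.univ K (pt i0 x₀ (m + j))) (2 * d) (by positivity) (fun j => by
      refine step_up hdpos K i0 x₀ (m + j) ?_
      intro h; have := hKh _ h; rw [pt_self] at this; push_cast at this; omega) (3 * N + 1)
    have h2 := hfar (pt i0 x₀ (m + (3 * N + 1))) (by
      intro h; rw [hW, mem_cube] at h
      have := h i0; rw [pt_self] at this; omega)
    beta_reduce at h1
    rw [add_zero] at h1
    by_contra hcon
    push Not at hcon
    have h3 : (0:ℝ) < (2 * d)^(3 * N + 1) := by positivity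
    nlinarith
  have hc := hcore K n x₀ m hKh hx0 hm
  have hup := upper_law hdpos ν _ hν W D K hWD
  have hlo := lower_law hdpos ν _ hν D K (cube x₀ (m / 2))
  have hlo1 := lower_law hdpos ν _ hν D K ∅
  rw [Set.union_empty] at hlo1
  rw [ProbabilityTheory.cond_apply (meas_avoid D K), ENNReal.toReal_mul, ENNReal.toReal_inv]
  set s := (ν { ω | avoidBeforeExit D K ω }).toReal with hs
  have hspos : 0 < s := by
    have : (ν ({ω | avoidBeforeExit D K ω} ∩ {ω | avoidBeforeExit D ∅ ω})).toReal ≤ s := 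
      ENNReal.toReal_mono (measure_ne_top _ _) (measure_mono Set.inter_subset_left)
    linarith
  rw [le_inv_mul_iff₀ hspos]
  have h5 := mul_le_mul_of_nonneg_left hup (mul_pos hc1 hc2).le
  have h6 := mul_le_mul_of_nonneg_left hq hc2.le
  nlinarith

/-- Lemma 3.5.  Let `d ≥ 3`, `N ≥ 1`, `Q_{4N} ⊆ D ⊆ ℤ^d`, `8 ≤ m ≤ N/2`, `n ≤ N`.
For any nonempty `𝒦 ⊆ Q_n`, `x₀ ∈ 𝒦 ∩ H_n` and `z₀ = x₀ + m e₁`, there is a constant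
`c = c(d) > 0` with `P^{z₀}( T_{Q(x₀,m/2)} > τ_D | T_𝒦 > τ_D ) ≥ c`. -/
theorem avoid_box_given_avoid_K :
    ∀ d : ℕ, 3 ≤ d → ∃ c : ℝ, 0 < c ∧
      ∀ (N n m : ℕ) (D 𝒦 : Set (V d)) (x₀ : V d),
        1 ≤ N → cube 0 (4 * N) ⊆ D → 8 ≤ m → m ≤ N / 2 → n ≤ N →
        𝒦.Nonempty → 𝒦 ⊆ cube 0 n → x₀ ∈ 𝒦 →
        (∀ i : Fin d, (i : ℕ) = 0 → x₀ i = (n : ℤ)) →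
        ∀ ν : Measure (ℕ → V d), IsSRWLaw ν (x₀ + (m : ℤ) • unitVec 0) →
          c ≤ (ProbabilityTheory.cond ν
                { ω | avoidBeforeExit D 𝒦 ω }
                { ω | avoidBeforeExit D (cube x₀ (m / 2)) ω }).toReal := by
  intro d hd
  obtain ⟨c, hc, h⟩ := final_aux hd
  exact ⟨c, hc, fun N n m D 𝒦 x₀ h1 h2 h3 h4 h5 _ h7 h8 h9 ν hν => h N n m D 𝒦 x₀ h1 h2 h3 h4 h5 h7 h8 h9 ν hν⟩

end USFPaper
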